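/- arXiv:math/9902031 — 7 statements merged into one kernel-verified Lean document; each statement's English description precedes it below -/
import Mathlib

section
/- Let k be a field and let q ∈ k be nonzero. There exists a k-algebra homomorphism δ : GL_q(2) → GL_q(2,-2) ⊗ GL_q(-2,2) defined on generators by δ(x_{ij}) = Σ_k z_{ik} ⊗ t_{kj} (for 1 ≤ i,j ≤ 2) and δ(t) = τ ⊗ ξ. -/
open TensorProduct

/-- The five generators `x11, x12, x21, x22, t` of the algebra `GL_q(2)`. -/
inductive XGen : Type
  | x11 | x12 | x21 | x22 | t

def Xf (k : Type) [Field k] : XGen → FreeAlgebra k XGen := FreeAlgebra.ι k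

/-- The defining relations of `GL_q(2)`. -/
inductive GLq2Rel (k : Type) [Field k] (q : k) :
    FreeAlgebra k XGen → FreeAlgebra k XGen → Prop
  | r1 : GLq2Rel k q (Xf k .x12 * Xf k .x11) (q • (Xf k .x11 * Xf k .x12))
  | r2 : GLq2Rel k q (Xf k .x21 * Xf k .x11) (q • (Xf k .x11 * Xf k .x21))
  | r3 : GLq2Rel k q (Xf k .x22 * Xf k .x12) (q • (Xf k .x12 * Xf k .x22))
  | r4 : GLq2Rel k q (Xf k .x22 * Xf k .x21) (q • (Xf k .x21 * Xf k .x22))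
  | r5 : GLq2Rel k q (Xf k .x12 * Xf k .x21) (Xf k .x21 * Xf k .x12)
  | r6 : GLq2Rel k q (Xf k .x11 * Xf k .x22 - Xf k .x22 * Xf k .x11)
      ((q⁻¹ - q) • (Xf k .x12 * Xf k .x21))
  | r7 : GLq2Rel k q (Xf k .x11 * Xf k .t) (Xf k .t * Xf k .x11)
  | r8 : GLq2Rel k q (Xf k .x22 * Xf k .t) (Xf k .t * Xf k .x22)
  | r9 : GLq2Rel k q (Xf k .x12 * Xf k .t) (Xf k .t * Xf k .x12)
  | r10 : GLq2Rel k q (Xf k .x21 * Xf k .t) (Xf k .t * Xf k .x21)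
  | r11 : GLq2Rel k q ((Xf k .x11 * Xf k .x22 - q⁻¹ • (Xf k .x12 * Xf k .x21)) * Xf k .t) 1

/-- The algebra `GL_q(2)`. -/
abbrev GLq2 (k : Type) [Field k] (q : k) := RingQuot (GLq2Rel k q)

/-- The five generators `z11, z12, z21, z22, τ` of the algebra `GL_q(2,-2)`. -/
inductive ZGen : Type
  | z11 | z12 | z21 | z22 | tau

def Zf (k : Type) [Field k] : ZGen → FreeAlgebra k ZGen := FreeAlgebra.ι k

/-- The defining relations of `GL_q(2,-2)`. -/
inductive GLq22Rel (k : Type) [Field k] (q : k) :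
    FreeAlgebra k ZGen → FreeAlgebra k ZGen → Prop
  | r1 : GLq22Rel k q (Zf k .z12 * Zf k .z11) (-(q • (Zf k .z11 * Zf k .z12)))
  | r2 : GLq22Rel k q (Zf k .z21 * Zf k .z11) (q • (Zf k .z11 * Zf k .z21))
  | r3 : GLq22Rel k q (Zf k .z22 * Zf k .z12) (q • (Zf k .z12 * Zf k .z22))
  | r4 : GLq22Rel k q (Zf k .z22 * Zf k .z21) (-(q • (Zf k .z21 * Zf k .z22)))
  | r5 : GLq22Rel k q (Zf k .z12 * Zf k .z21) (-(Zf k .z21 * Zf k .z12))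
  | r6 : GLq22Rel k q (Zf k .z11 * Zf k .z22 + Zf k .z22 * Zf k .z11)
      ((q - q⁻¹) • (Zf k .z12 * Zf k .z21))
  | r7 : GLq22Rel k q (Zf k .z11 * Zf k .tau) (-(Zf k .tau * Zf k .z11))
  | r8 : GLq22Rel k q (Zf k .z22 * Zf k .tau) (-(Zf k .tau * Zf k .z22))
  | r9 : GLq22Rel k q (Zf k .z12 * Zf k .tau) (-(Zf k .tau * Zf k .z12))
  | r10 : GLq22Rel k q (Zf k .z21 * Zf k .tau) (-(Zf k .tau * Zf k .z21))
  | r11 : GLq22Rel k q ((Zf k .z11 * Zf k .z22 + q⁻¹ • (Zf k .z12 * Zf k .z21)) * Zf k .tau) 1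

/-- The algebra `GL_q(2,-2)`. -/
abbrev GLq22 (k : Type) [Field k] (q : k) := RingQuot (GLq22Rel k q)

/-- The five generators `t11, t12, t21, t22, ξ` of the algebra `GL_q(-2,2)`. -/
inductive TGen : Type
  | t11 | t12 | t21 | t22 | xi

def Tf (k : Type) [Field k] : TGen → FreeAlgebra k TGen := FreeAlgebra.ι k

/-- The defining relations of `GL_q(-2,2)`. -/
inductive GLqm22Rel (k : Type) [Field k] (q : k) :
    FreeAlgebra k TGen → FreeAlgebra k TGen → Prop
  | r1 : GLqm22Rel k q (Tf k .t12 * Tf k .t11) (q • (Tf k .t11 * Tf k .t12))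
  | r2 : GLqm22Rel k q (Tf k .t21 * Tf k .t11) (-(q • (Tf k .t11 * Tf k .t21)))
  | r3 : GLqm22Rel k q (Tf k .t22 * Tf k .t12) (-(q • (Tf k .t12 * Tf k .t22)))
  | r4 : GLqm22Rel k q (Tf k .t22 * Tf k .t21) (q • (Tf k .t21 * Tf k .t22))
  | r5 : GLqm22Rel k q (Tf k .t12 * Tf k .t21) (-(Tf k .t21 * Tf k .t12))
  | r6 : GLqm22Rel k q (Tf k .t11 * Tf k .t22 + Tf k .t22 * Tf k .t11)
      ((q⁻¹ - q) • (Tf k .t12 * Tf k .t21))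
  | r7 : GLqm22Rel k q (Tf k .t11 * Tf k .xi) (-(Tf k .xi * Tf k .t11))
  | r8 : GLqm22Rel k q (Tf k .t12 * Tf k .xi) (-(Tf k .xi * Tf k .t12))
  | r9 : GLqm22Rel k q (Tf k .t21 * Tf k .xi) (-(Tf k .xi * Tf k .t21))
  | r10 : GLqm22Rel k q (Tf k .t22 * Tf k .xi) (-(Tf k .xi * Tf k .t22))
  | r11 : GLqm22Rel k q ((Tf k .t11 * Tf k .t22 - q⁻¹ • (Tf k .t12 * Tf k .t21)) * Tf k .xi) 1

/-- The algebra `GL_q(-2,2)`. -/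
abbrev GLqm22 (k : Type) [Field k] (q : k) := RingQuot (GLqm22Rel k q)

noncomputable section

/-- The generating matrix entries `x_{ij}` of `GL_q(2)`. -/
def xM (k : Type) [Field k] (q : k) : Fin 2 → Fin 2 → GLq2 k q :=
  ![![RingQuot.mkAlgHom k (GLq2Rel k q) (Xf k .x11),
     RingQuot.mkAlgHom k (GLq2Rel k q) (Xf k .x12)],
    ![RingQuot.mkAlgHom k (GLq2Rel k q) (Xf k .x21),
     RingQuot.mkAlgHom k (GLq2Rel k q) (Xf k .x22)]]

/-- The element `t` of `GL_q(2)`. -/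
def tE (k : Type) [Field k] (q : k) : GLq2 k q := RingQuot.mkAlgHom k (GLq2Rel k q) (Xf k .t)

/-- The generating matrix entries `z_{ij}` of `GL_q(2,-2)`. -/
def zM (k : Type) [Field k] (q : k) : Fin 2 → Fin 2 → GLq22 k q :=
  ![![RingQuot.mkAlgHom k (GLq22Rel k q) (Zf k .z11),
     RingQuot.mkAlgHom k (GLq22Rel k q) (Zf k .z12)],
    ![RingQuot.mkAlgHom k (GLq22Rel k q) (Zf k .z21),
     RingQuot.mkAlgHom k (GLq22Rel k q) (Zf k .z22)]]

/-- The element `τ` of `GL_q(2,-2)`. -/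
def tauE (k : Type) [Field k] (q : k) : GLq22 k q :=
  RingQuot.mkAlgHom k (GLq22Rel k q) (Zf k .tau)

/-- The generating matrix entries `t_{ij}` of `GL_q(-2,2)`. -/
def tM (k : Type) [Field k] (q : k) : Fin 2 → Fin 2 → GLqm22 k q :=
  ![![RingQuot.mkAlgHom k (GLqm22Rel k q) (Tf k .t11),
     RingQuot.mkAlgHom k (GLqm22Rel k q) (Tf k .t12)],
    ![RingQuot.mkAlgHom k (GLqm22Rel k q) (Tf k .t21),
     RingQuot.mkAlgHom k (GLqm22Rel k q) (Tf k .t22)]]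

/-- The element `ξ` of `GL_q(-2,2)`. -/
def xiE (k : Type) [Field k] (q : k) : GLqm22 k q :=
  RingQuot.mkAlgHom k (GLqm22Rel k q) (Tf k .xi)

theorem delta_rel {k : Type} [Field k] {q : k} (hq : q ≠ 0) {Z T : Type} [Ring Z] [Ring T]
    [Algebra k Z] [Algebra k T] {a b c d u : Z} {A B C D v : T}
    (z1 : b * a = -(q • (a * b))) (z2 : c * a = q • (a * c)) (z3 : d * b = q • (b * d))
    (z4 : d * c = -(q • (c * d))) (z5 : b * c = -(c * b))
    (z6 : a * d + d * a = (q - q⁻¹) • (b * c))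
    (z7 : a * u = -(u * a)) (z8 : d * u = -(u * d)) (z9 : b * u = -(u * b)) (z10 : c * u = -(u * c))
    (z11 : (a * d + q⁻¹ • (b * c)) * u = 1)
    (t1 : B * A = q • (A * B)) (t2 : C * A = -(q • (A * C))) (t3 : D * B = -(q • (B * D)))
    (t4 : D * C = q • (C * D)) (t5 : B * C = -(C * B))
    (t6 : A * D + D * A = (q⁻¹ - q) • (B * C))
    (t7 : A * v = -(v * A)) (t8 : B * v = -(v * B)) (t9 : C * v = -(v * C)) (t10 : D * v = -(v * D))
    (t11 : (A * D - q⁻¹ • (B * C)) * v = 1) :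
    ((a ⊗ₜ[k] B + b ⊗ₜ[k] D)*(a ⊗ₜ[k] A + b ⊗ₜ[k] C) = q•((a ⊗ₜ[k] A + b ⊗ₜ[k] C)*(a ⊗ₜ[k] B + b ⊗ₜ[k] D))) ∧
    ((c ⊗ₜ[k] A + d ⊗ₜ[k] C)*(a ⊗ₜ[k] A + b ⊗ₜ[k] C) = q•((a ⊗ₜ[k] A + b ⊗ₜ[k] C)*(c ⊗ₜ[k] A + d ⊗ₜ[k] C))) ∧
    ((c ⊗ₜ[k] B + d ⊗ₜ[k] D)*(a ⊗ₜ[k] B + b ⊗ₜ[k] D) = q•((a ⊗ₜ[k] B + b ⊗ₜ[k] D)*(c ⊗ₜ[k] B + d ⊗ₜ[k] D))) ∧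
    ((c ⊗ₜ[k] B + d ⊗ₜ[k] D)*(c ⊗ₜ[k] A + d ⊗ₜ[k] C) = q•((c ⊗ₜ[k] A + d ⊗ₜ[k] C)*(c ⊗ₜ[k] B + d ⊗ₜ[k] D))) ∧
    ((a ⊗ₜ[k] B + b ⊗ₜ[k] D)*(c ⊗ₜ[k] A + d ⊗ₜ[k] C) = (c ⊗ₜ[k] A + d ⊗ₜ[k] C)*(a ⊗ₜ[k] B + b ⊗ₜ[k] D)) ∧
    ((a ⊗ₜ[k] A + b ⊗ₜ[k] C)*(c ⊗ₜ[k] B + d ⊗ₜ[k] D)-(c ⊗ₜ[k] B + d ⊗ₜ[k] D)*(a ⊗ₜ[k] A + b ⊗ₜ[k] C) = (q⁻¹-q)•((a ⊗ₜ[k] B + b ⊗ₜ[k] D)*(c ⊗ₜ[k] A + d ⊗ₜ[k] C))) ∧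
    ((a ⊗ₜ[k] A + b ⊗ₜ[k] C)*(u ⊗ₜ[k] v) = (u ⊗ₜ[k] v)*(a ⊗ₜ[k] A + b ⊗ₜ[k] C)) ∧
    ((c ⊗ₜ[k] B + d ⊗ₜ[k] D)*(u ⊗ₜ[k] v) = (u ⊗ₜ[k] v)*(c ⊗ₜ[k] B + d ⊗ₜ[k] D)) ∧
    ((a ⊗ₜ[k] B + b ⊗ₜ[k] D)*(u ⊗ₜ[k] v) = (u ⊗ₜ[k] v)*(a ⊗ₜ[k] B + b ⊗ₜ[k] D)) ∧
    ((c ⊗ₜ[k] A + d ⊗ₜ[k] C)*(u ⊗ₜ[k] v) = (u ⊗ₜ[k] v)*(c ⊗ₜ[k] A + d ⊗ₜ[k] C)) ∧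
    (((a ⊗ₜ[k] A + b ⊗ₜ[k] C)*(c ⊗ₜ[k] B + d ⊗ₜ[k] D)-q⁻¹•((a ⊗ₜ[k] B + b ⊗ₜ[k] D)*(c ⊗ₜ[k] A + d ⊗ₜ[k] C)))*(u ⊗ₜ[k] v) = 1) := by
  have z5' : c * b = -(b * c) := by rw [z5, neg_neg]
  have t5' : C * B = -(B * C) := by rw [t5, neg_neg]
  have z6' : d * a = (q - q⁻¹) • (b * c) - a * d := by rw [← z6]; abel
  have t6' : D * A = (q⁻¹ - q) • (B * C) - A * D := by rw [← t6]; abel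
  clear z5 t5 z6 t6
  have hdet : ((a ⊗ₜ[k] A + b ⊗ₜ[k] C)*(c ⊗ₜ[k] B + d ⊗ₜ[k] D)-q⁻¹•((a ⊗ₜ[k] B + b ⊗ₜ[k] D)*(c ⊗ₜ[k] A + d ⊗ₜ[k] C))) =
      (a * d + q⁻¹ • (b * c)) ⊗ₜ[k] (A * D - q⁻¹ • (B * C)) := by
    simp only [mul_add, add_mul, Algebra.TensorProduct.tmul_mul_tmul, z1, z2, z3, z4, z5', z6', t1, t2, t3, t4, t5', t6', tmul_add, add_tmul, tmul_sub, sub_tmul, tmul_neg, neg_tmul, tmul_smul, ← smul_tmul']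
    match_scalars <;> field_simp <;> ring
  refine ⟨?_, ?_, ?_, ?_, ?_, ?_, ?_, ?_, ?_, ?_, ?_⟩
  case refine_11 =>
    rw [hdet, Algebra.TensorProduct.tmul_mul_tmul, z11, t11]; rfl
  all_goals
    simp only [mul_add, add_mul, Algebra.TensorProduct.tmul_mul_tmul, z1, z2, z3, z4, z5', z6', z7, z8, z9, z10, t1, t2, t3, t4, t5', t6', t7, t8, t9, t10, tmul_add, add_tmul, tmul_sub, sub_tmul, tmul_neg, neg_tmul, tmul_smul, ← smul_tmul', neg_neg]
    try (match_scalars <;> field_simp <;> ring)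

/-- There is a `k`-algebra homomorphism `δ : GL_q(2) → GL_q(2,-2) ⊗ GL_q(-2,2)`
with `δ(x_{ij}) = Σ_l z_{il} ⊗ t_{lj}` and `δ(t) = τ ⊗ ξ`. -/
theorem GLq2_delta_exists (k : Type) [Field k] (q : k) (hq : q ≠ 0) :
    ∃ δ : GLq2 k q →ₐ[k] GLq22 k q ⊗[k] GLqm22 k q,
      (∀ i j : Fin 2, δ (xM k q i j) = ∑ l : Fin 2, zM k q i l ⊗ₜ[k] tM k q l j) ∧
      δ (tE k q) = tauE k q ⊗ₜ[k] xiE k q := by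
  have hz := @RingQuot.mkAlgHom_rel k _ _ _ _ (GLq22Rel k q)
  have ht := @RingQuot.mkAlgHom_rel k _ _ _ _ (GLqm22Rel k q)
  have z1 := hz .r1
  have z2 := hz .r2
  have z3 := hz .r3
  have z4 := hz .r4
  have z5 := hz .r5
  have z6 := hz .r6
  have z7 := hz .r7
  have z8 := hz .r8
  have z9 := hz .r9
  have z10 := hz .r10
  have z11 := hz .r11
  have t1 := ht .r1
  have t2 := ht .r2
  have t3 := ht .r3
  have t4 := ht .r4
  have t5 := ht .r5
  have t6 := ht .r6
  have t7 := ht .r7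
  have t8 := ht .r8
  have t9 := ht .r9
  have t10 := ht .r10
  have t11 := ht .r11
  simp only [map_mul, map_add, map_sub, map_neg, map_smul, map_one] at z1 z2 z3 z4 z5 z6 z7 z8 z9 z10 z11 t1 t2 t3 t4 t5 t6 t7 t8 t9 t10 t11
  obtain ⟨r1, r2, r3, r4, r5, r6, r7, r8, r9, r10, r11⟩ :=
    delta_rel hq z1 z2 z3 z4 z5 z6 z7 z8 z9 z10 z11 t1 t2 t3 t4 t5 t6 t7 t8 t9 t10 t11
  let f : XGen → GLq22 k q ⊗[k] GLqm22 k q := fun g => match g with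
    | .x11 => zM k q 0 0 ⊗ₜ[k] tM k q 0 0 + zM k q 0 1 ⊗ₜ[k] tM k q 1 0
    | .x12 => zM k q 0 0 ⊗ₜ[k] tM k q 0 1 + zM k q 0 1 ⊗ₜ[k] tM k q 1 1
    | .x21 => zM k q 1 0 ⊗ₜ[k] tM k q 0 0 + zM k q 1 1 ⊗ₜ[k] tM k q 1 0
    | .x22 => zM k q 1 0 ⊗ₜ[k] tM k q 0 1 + zM k q 1 1 ⊗ₜ[k] tM k q 1 1
    | .t => tauE k q ⊗ₜ[k] xiE k q
  have hf : ∀ g, FreeAlgebra.lift k f (Xf k g) = f g := fun g => FreeAlgebra.lift_ι_apply f g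
  have key : ∀ ⦃x y⦄, GLq2Rel k q x y → FreeAlgebra.lift k f x = FreeAlgebra.lift k f y := by
    intro x y h
    cases h <;> simp only [map_mul, map_add, map_sub, map_neg, map_smul, map_one, hf]
    · exact r1
    · exact r2
    · exact r3
    · exact r4
    · exact r5
    · exact r6
    · exact r7
    · exact r8
    · exact r9
    · exact r10
    · exact r11
  refine ⟨RingQuot.liftAlgHom k ⟨FreeAlgebra.lift k f, key⟩, ?_, ?_⟩
  · intro i j
    rw [Fin.sum_univ_two]
    fin_cases i <;> fin_cases j <;>
    · refine (RingQuot.liftAlgHom_mkAlgHom_apply k _ _ _).trans ?_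
      exact hf _
  · refine (RingQuot.liftAlgHom_mkAlgHom_apply k _ _ _).trans ?_
    exact hf _

end
end

section
/- Let k be a field and let q ∈ k be nonzero. There exists an anti-isomorphism of k-algebras φ : GL_q(-2,2) → GL_q(2,-2) (a bijective k-linear map with φ(1) = 1 and φ(ab) = φ(b)φ(a) for all a, b) such that φ(t11) = z22 τ, φ(t12) = q τ z12, φ(t21) = q^{-1} z21 τ, φ(t22) = τ z11 and φ(ξ) = z11 z22 + q^{-1} z12 z21. -/
noncomputable section

section helpers
set_option linter.unusedSimpArgs false
variable {k A : Type} [Field k] [Ring A] [Algebra k A]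

theorem hp_inv_comm {D T : A} (h : D * T = 1) (hc : D * T = T * D) {z : A} (hz : z * T = -(T * z)) :
    z * D = -(D * z) := by
  have h' : T * D = 1 := hc ▸ h
  calc z * D = (D * T) * z * D := by rw [h, one_mul]
    _ = D * (T * z) * D := by noncomm_ring
    _ = D * (-(z * T)) * D := by rw [hz, neg_neg]
    _ = -(D * z * (T * D)) := by noncomm_ring
    _ = _ := by rw [h', mul_one]

theorem hp_assoc {z T : A} (hz : z * T = -(T * z)) (w : A) : z * (T * w) = -(T * (z * w)) := by
  rw [← mul_assoc, hz]; noncomm_ring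

theorem hp_prod {z w T : A} (hz : z * T = -(T * z)) (hw : w * T = -(T * w)) :
    z * w * T = T * (z * w) := by
  rw [mul_assoc, hw, mul_neg, ← mul_assoc, hz]; noncomm_ring

theorem hp_one {D T : A} (h : D * T = 1) (w : A) : D * (T * w) = w := by
  rw [← mul_assoc, h, one_mul]

theorem hp_add {x y T : A} {r : k} (hx : x * T = T * x) (hy : y * T = T * y) :
    (x + r • y) * T = T * (x + r • y) := by
  rw [add_mul, mul_add, smul_mul_assoc, mul_smul_comm, hx, hy]

theorem hp_sub {x y T : A} {r : k} (hx : x * T = T * x) (hy : y * T = T * y) :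
    (x - r • y) * T = T * (x - r • y) := by
  rw [sub_mul, mul_sub, smul_mul_assoc, mul_smul_comm, hx, hy]

theorem gen_z (q : k) (hq : q ≠ 0) (a b c d T D : A) (hD : D = a * d + q⁻¹ • (b * c))
    (e1 : b * a = -(q • (a * b))) (e2 : c * a = q • (a * c)) (e3 : d * b = q • (b * d)) (e4 : d * c = -(q • (c * d)))
    (e5 : c * b = -(b * c)) (e6 : d * a = (q - q⁻¹) • (b * c) - a * d)
    (f1 : a * T = -(T * a)) (f2 : b * T = -(T * b)) (f3 : c * T = -(T * c)) (f4 : d * T = -(T * d))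
    (g1 : a * D = -(D * a)) (g2 : b * D = -(D * b)) (g3 : c * D = -(D * c)) (g4 : d * D = -(D * d))
    (i1 : D * T = 1) (i2 : T * D = 1) :
    ((d * T) * (q • (T * b)) = q • ((q • (T * b)) * (d * T))) ∧
    ((d * T) * (q⁻¹ • (c * T)) = -(q • ((q⁻¹ • (c * T)) * (d * T)))) ∧
    ((q • (T * b)) * (T * a) = -(q • ((T * a) * (q • (T * b))))) ∧
    ((q⁻¹ • (c * T)) * (T * a) = q • ((T * a) * (q⁻¹ • (c * T)))) ∧
    ((q⁻¹ • (c * T)) * (q • (T * b)) = -((q • (T * b)) * (q⁻¹ • (c * T)))) ∧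
    ((T * a) * (d * T) + (d * T) * (T * a) = (q⁻¹ - q) • ((q⁻¹ • (c * T)) * (q • (T * b)))) ∧
    (D * (d * T) = -((d * T) * D)) ∧
    (D * (q • (T * b)) = -((q • (T * b)) * D)) ∧
    (D * (q⁻¹ • (c * T)) = -((q⁻¹ • (c * T)) * D)) ∧
    (D * (T * a) = -((T * a) * D)) ∧
    (D * ((T * a) * (d * T) - q⁻¹ • ((q⁻¹ • (c * T)) * (q • (T * b)))) = 1) ∧
    ((T * a) * (d * T) - q⁻¹ • ((q⁻¹ • (c * T)) * (q • (T * b))) = T) := by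
  have hDD : a * d = D - q⁻¹ • (b * c) := by rw [hD]; abel
  clear hD
  refine ⟨?_, ?_, ?_, ?_, ?_, ?_, ?_, ?_, ?_, ?_, ?_, ?_⟩ <;>
  simp only [mul_assoc, smul_mul_assoc, mul_smul_comm,
    e1, e2, e3, e4, e5, e6, f1, f2, f3, f4, g1, g2, g3, g4, i1, i2, hp_one i1, hp_one i2,
    hp_assoc f1, hp_assoc f2, hp_assoc f3, hp_assoc f4, hp_assoc g1, hp_assoc g2, hp_assoc g3,
    hp_assoc g4, mul_neg, neg_mul, mul_add, mul_sub, smul_neg, neg_neg, smul_add, smul_sub,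
    sub_neg_eq_add, mul_one, hDD] <;>
  first | done | (match_scalars <;> try field_simp) <;> try ring

theorem gen_t (q : k) (hq : q ≠ 0) (a b c d T D : A) (hD : D = a * d - q⁻¹ • (b * c))
    (e1 : b * a = q • (a * b)) (e2 : c * a = -(q • (a * c))) (e3 : d * b = -(q • (b * d))) (e4 : d * c = q • (c * d))
    (e5 : c * b = -(b * c)) (e6 : d * a = (q⁻¹ - q) • (b * c) - a * d)
    (f1 : a * T = -(T * a)) (f2 : b * T = -(T * b)) (f3 : c * T = -(T * c)) (f4 : d * T = -(T * d))
    (g1 : a * D = -(D * a)) (g2 : b * D = -(D * b)) (g3 : c * D = -(D * c)) (g4 : d * D = -(D * d))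
    (i1 : D * T = 1) (i2 : T * D = 1) :
    ((d * T) * (q⁻¹ • (b * T)) = -(q • ((q⁻¹ • (b * T)) * (d * T)))) ∧
    ((d * T) * (q • (T * c)) = q • ((q • (T * c)) * (d * T))) ∧
    ((q⁻¹ • (b * T)) * (T * a) = q • ((T * a) * (q⁻¹ • (b * T)))) ∧
    ((q • (T * c)) * (T * a) = -(q • ((T * a) * (q • (T * c))))) ∧
    ((q • (T * c)) * (q⁻¹ • (b * T)) = -((q⁻¹ • (b * T)) * (q • (T * c)))) ∧
    ((T * a) * (d * T) + (d * T) * (T * a) = (q - q⁻¹) • ((q • (T * c)) * (q⁻¹ • (b * T)))) ∧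
    (D * (d * T) = -((d * T) * D)) ∧
    (D * (T * a) = -((T * a) * D)) ∧
    (D * (q⁻¹ • (b * T)) = -((q⁻¹ • (b * T)) * D)) ∧
    (D * (q • (T * c)) = -((q • (T * c)) * D)) ∧
    (D * ((T * a) * (d * T) + q⁻¹ • ((q • (T * c)) * (q⁻¹ • (b * T)))) = 1) ∧
    ((T * a) * (d * T) + q⁻¹ • ((q • (T * c)) * (q⁻¹ • (b * T))) = T) := by
  have hDD : a * d = D + q⁻¹ • (b * c) := by rw [hD]; abel
  clear hD
  refine ⟨?_, ?_, ?_, ?_, ?_, ?_, ?_, ?_, ?_, ?_, ?_, ?_⟩ <;>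
  simp only [mul_assoc, smul_mul_assoc, mul_smul_comm,
    e1, e2, e3, e4, e5, e6, f1, f2, f3, f4, g1, g2, g3, g4, i1, i2, hp_one i1, hp_one i2,
    hp_assoc f1, hp_assoc f2, hp_assoc f3, hp_assoc f4, hp_assoc g1, hp_assoc g2, hp_assoc g3,
    hp_assoc g4, mul_neg, neg_mul, mul_add, mul_sub, smul_neg, neg_neg, smul_add, smul_sub,
    sub_neg_eq_add, mul_one, hDD] <;>
  first | done | (match_scalars <;> try field_simp) <;> try ring

end helpers

def zfun (k : Type) [Field k] (q : k) : TGen → (GLq22 k q)ᵐᵒᵖ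
  | .t11 => .op (zM k q 1 1 * tauE k q)
  | .t12 => .op (q • (tauE k q * zM k q 0 1))
  | .t21 => .op (q⁻¹ • (zM k q 1 0 * tauE k q))
  | .t22 => .op (tauE k q * zM k q 0 0)
  | .xi => .op (zM k q 0 0 * zM k q 1 1 + q⁻¹ • (zM k q 0 1 * zM k q 1 0))

def tfun (k : Type) [Field k] (q : k) : ZGen → (GLqm22 k q)ᵐᵒᵖ
  | .z11 => .op (tM k q 1 1 * xiE k q)
  | .z12 => .op (q⁻¹ • (tM k q 0 1 * xiE k q))
  | .z21 => .op (q • (xiE k q * tM k q 1 0))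
  | .z22 => .op (xiE k q * tM k q 0 0)
  | .tau => .op (tM k q 0 0 * tM k q 1 1 - q⁻¹ • (tM k q 0 1 * tM k q 1 0))

theorem z_facts (k : Type) [Field k] (q : k) :
    ∃ a b c d T D : GLq22 k q, a = zM k q 0 0 ∧ b = zM k q 0 1 ∧ c = zM k q 1 0 ∧ d = zM k q 1 1 ∧
      T = tauE k q ∧ D = a * d + q⁻¹ • (b * c) ∧
      b * a = -(q • (a * b)) ∧ c * a = q • (a * c) ∧ d * b = q • (b * d) ∧ d * c = -(q • (c * d)) ∧
      c * b = -(b * c) ∧ d * a = (q - q⁻¹) • (b * c) - a * d ∧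
      a * T = -(T * a) ∧ b * T = -(T * b) ∧ c * T = -(T * c) ∧ d * T = -(T * d) ∧
      a * D = -(D * a) ∧ b * D = -(D * b) ∧ c * D = -(D * c) ∧ d * D = -(D * d) ∧
      D * T = 1 ∧ T * D = 1 := by
  have R := fun {x y} (h : GLq22Rel k q x y) => RingQuot.mkAlgHom_rel k h
  have h1 := R .r1
  have h2 := R .r2
  have h3 := R .r3
  have h4 := R .r4
  have h5 := R .r5
  have h6 := R .r6
  have h7 := R .r7
  have h8 := R .r8
  have h9 := R .r9
  have h10 := R .r10
  have h11 := R .r11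
  simp only [map_mul, map_add, map_neg, map_smul, map_one] at h1 h2 h3 h4 h5 h6 h7 h8 h9 h10 h11
  have hc := hp_add (r := q⁻¹) (hp_prod h7 h8) (hp_prod h9 h10)
  refine ⟨_, _, _, _, _, _, rfl, rfl, rfl, rfl, rfl, rfl, h1, h2, h3, h4, ?_, ?_, h7, h9, h10, h8,
    hp_inv_comm h11 hc h7, hp_inv_comm h11 hc h9, hp_inv_comm h11 hc h10, hp_inv_comm h11 hc h8,
    h11, hc ▸ h11⟩
  · exact (neg_eq_iff_eq_neg.mpr h5).symm
  · exact eq_sub_of_add_eq (by rw [add_comm]; exact h6)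

theorem t_facts (k : Type) [Field k] (q : k) :
    ∃ a b c d T D : GLqm22 k q, a = tM k q 0 0 ∧ b = tM k q 0 1 ∧ c = tM k q 1 0 ∧ d = tM k q 1 1 ∧
      T = xiE k q ∧ D = a * d - q⁻¹ • (b * c) ∧
      b * a = q • (a * b) ∧ c * a = -(q • (a * c)) ∧ d * b = -(q • (b * d)) ∧ d * c = q • (c * d) ∧
      c * b = -(b * c) ∧ d * a = (q⁻¹ - q) • (b * c) - a * d ∧
      a * T = -(T * a) ∧ b * T = -(T * b) ∧ c * T = -(T * c) ∧ d * T = -(T * d) ∧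
      a * D = -(D * a) ∧ b * D = -(D * b) ∧ c * D = -(D * c) ∧ d * D = -(D * d) ∧
      D * T = 1 ∧ T * D = 1 := by
  have R := fun {x y} (h : GLqm22Rel k q x y) => RingQuot.mkAlgHom_rel k h
  have h1 := R .r1
  have h2 := R .r2
  have h3 := R .r3
  have h4 := R .r4
  have h5 := R .r5
  have h6 := R .r6
  have h7 := R .r7
  have h9 := R .r8
  have h10 := R .r9
  have h8 := R .r10
  have h11 := R .r11
  simp only [map_mul, map_add, map_sub, map_neg, map_smul, map_one] at h1 h2 h3 h4 h5 h6 h7 h8 h9 h10 h11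
  have hc := hp_sub (r := q⁻¹) (hp_prod h7 h8) (hp_prod h9 h10)
  refine ⟨_, _, _, _, _, _, rfl, rfl, rfl, rfl, rfl, rfl, h1, h2, h3, h4, ?_, ?_, h7, h9, h10, h8,
    hp_inv_comm h11 hc h7, hp_inv_comm h11 hc h9, hp_inv_comm h11 hc h10, hp_inv_comm h11 hc h8,
    h11, hc ▸ h11⟩
  · exact (neg_eq_iff_eq_neg.mpr h5).symm
  · exact eq_sub_of_add_eq (by rw [add_comm]; exact h6)

theorem zfun_rel (k : Type) [Field k] (q : k) (hq : q ≠ 0) ⦃x y : FreeAlgebra k TGen⦄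
    (h : GLqm22Rel k q x y) : FreeAlgebra.lift k (zfun k q) x = FreeAlgebra.lift k (zfun k q) y := by
  obtain ⟨a, b, c, d, T, D, ha, hb, hc, hd, hT, hD, e1, e2, e3, e4, e5, e6, f1, f2, f3, f4,
    g1, g2, g3, g4, i1, i2⟩ := z_facts k q
  obtain ⟨k1, k2, k3, k4, k5, k6, k7, k8, k9, k10, k11, -⟩ := gen_z q hq a b c d T D hD e1 e2 e3 e4 e5 e6 f1 f2 f3 f4 g1 g2 g3 g4 i1 i2
  cases h <;> apply MulOpposite.unop_injective <;>
  simp only [Tf, map_mul, map_add, map_sub, map_neg, map_smul, map_one, FreeAlgebra.lift_ι_apply,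
    zfun, ← ha, ← hb, ← hc, ← hd, ← hT, ← hD, MulOpposite.unop_mul, MulOpposite.unop_op,
    MulOpposite.unop_add, MulOpposite.unop_sub, MulOpposite.unop_neg, MulOpposite.unop_smul,
    MulOpposite.unop_one]
  · exact k1
  · exact k2
  · exact k3
  · exact k4
  · exact k5
  · exact k6
  · exact k7
  · exact k8
  · exact k9
  · exact k10
  · exact k11

theorem tfun_rel (k : Type) [Field k] (q : k) (hq : q ≠ 0) ⦃x y : FreeAlgebra k ZGen⦄
    (h : GLq22Rel k q x y) : FreeAlgebra.lift k (tfun k q) x = FreeAlgebra.lift k (tfun k q) y := by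
  obtain ⟨a, b, c, d, T, D, ha, hb, hc, hd, hT, hD, e1, e2, e3, e4, e5, e6, f1, f2, f3, f4,
    g1, g2, g3, g4, i1, i2⟩ := t_facts k q
  obtain ⟨k1, k2, k3, k4, k5, k6, k7, k8, k9, k10, k11, -⟩ := gen_t q hq a b c d T D hD e1 e2 e3 e4 e5 e6 f1 f2 f3 f4 g1 g2 g3 g4 i1 i2
  cases h <;> apply MulOpposite.unop_injective <;>
  simp only [Zf, map_mul, map_add, map_sub, map_neg, map_smul, map_one, FreeAlgebra.lift_ι_apply,
    tfun, ← ha, ← hb, ← hc, ← hd, ← hT, ← hD, MulOpposite.unop_mul, MulOpposite.unop_op,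
    MulOpposite.unop_add, MulOpposite.unop_sub, MulOpposite.unop_neg, MulOpposite.unop_smul,
    MulOpposite.unop_one]
  · exact k1
  · exact k2
  · exact k3
  · exact k4
  · exact k5
  · exact k6
  · exact k7
  · exact k8
  · exact k9
  · exact k10
  · exact k11

def zHom (k : Type) [Field k] (q : k) (hq : q ≠ 0) : GLqm22 k q →ₐ[k] (GLq22 k q)ᵐᵒᵖ :=
  RingQuot.liftAlgHom k ⟨FreeAlgebra.lift k (zfun k q), zfun_rel k q hq⟩

def tHom (k : Type) [Field k] (q : k) (hq : q ≠ 0) : GLq22 k q →ₐ[k] (GLqm22 k q)ᵐᵒᵖ :=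
  RingQuot.liftAlgHom k ⟨FreeAlgebra.lift k (tfun k q), tfun_rel k q hq⟩

theorem zHom_gen (k : Type) [Field k] (q : k) (hq : q ≠ 0) (g : TGen) :
    zHom k q hq (RingQuot.mkAlgHom k (GLqm22Rel k q) (Tf k g)) = zfun k q g := by
  simp [zHom, Tf]

theorem tHom_gen (k : Type) [Field k] (q : k) (hq : q ≠ 0) (g : ZGen) :
    tHom k q hq (RingQuot.mkAlgHom k (GLq22Rel k q) (Zf k g)) = tfun k q g := by
  simp [tHom, Zf]

theorem tz_id (k : Type) [Field k] (q : k) (hq : q ≠ 0) :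
    (AlgHom.opComm (tHom k q hq)).comp (zHom k q hq) = AlgHom.id k _ := by
  obtain ⟨a, b, c, d, T, D, ha, hb, hc, hd, hT, hD, e1, e2, e3, e4, e5, e6, f1, f2, f3, f4,
    g1, g2, g3, g4, i1, i2⟩ := t_facts k q
  have z1 : tHom k q hq (zM k q 0 0) = _ := tHom_gen k q hq .z11
  have z2 : tHom k q hq (zM k q 0 1) = _ := tHom_gen k q hq .z12
  have z3 : tHom k q hq (zM k q 1 0) = _ := tHom_gen k q hq .z21
  have z4 : tHom k q hq (zM k q 1 1) = _ := tHom_gen k q hq .z22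
  have z5 : tHom k q hq (tauE k q) = _ := tHom_gen k q hq .tau
  obtain ⟨-, -, -, -, -, -, -, -, -, -, -, k12⟩ := gen_t q hq a b c d T D hD e1 e2 e3 e4 e5 e6 f1 f2 f3 f4 g1 g2 g3 g4 i1 i2
  apply RingQuot.ringQuot_ext'
  apply FreeAlgebra.hom_ext
  funext g
  change MulOpposite.unop (tHom k q hq (MulOpposite.unop (zHom k q hq
    (RingQuot.mkAlgHom k (GLqm22Rel k q) (Tf k g))))) = 
    RingQuot.mkAlgHom k (GLqm22Rel k q) (Tf k g)
  rw [zHom_gen]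
  cases g
  · change _ = tM k q 0 0
    simp only [zfun, MulOpposite.unop_op, map_mul, z4, z5, tfun, MulOpposite.unop_mul]
    rw [← ha, ← hb, ← hc, ← hd, ← hT, ← hD, hp_one i1]
  · change _ = tM k q 0 1
    simp only [zfun, MulOpposite.unop_op, map_mul, map_smul, z2, z5, tfun, MulOpposite.unop_mul,
      MulOpposite.unop_smul]
    rw [← ha, ← hb, ← hc, ← hd, ← hT, ← hD, smul_mul_assoc, smul_smul, mul_inv_cancel₀ hq,
      one_smul, mul_assoc, i2, mul_one]
  · change _ = tM k q 1 0
    simp only [zfun, MulOpposite.unop_op, map_mul, map_smul, z3, z5, tfun, MulOpposite.unop_mul,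
      MulOpposite.unop_smul]
    rw [← ha, ← hb, ← hc, ← hd, ← hT, ← hD, mul_smul_comm, smul_smul, inv_mul_cancel₀ hq,
      one_smul, hp_one i1]
  · change _ = tM k q 1 1
    simp only [zfun, MulOpposite.unop_op, map_mul, z1, z5, tfun, MulOpposite.unop_mul]
    rw [← ha, ← hb, ← hc, ← hd, ← hT, ← hD, mul_assoc, i2, mul_one]
  · change _ = xiE k q
    simp only [zfun, MulOpposite.unop_op, map_mul, map_add, map_smul, z1, z2, z3, z4, tfun,
      MulOpposite.unop_mul, MulOpposite.unop_add, MulOpposite.unop_smul,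
      ← ha, ← hb, ← hc, ← hd, ← hT]
    exact k12

theorem zt_id (k : Type) [Field k] (q : k) (hq : q ≠ 0) :
    (AlgHom.opComm (zHom k q hq)).comp (tHom k q hq) = AlgHom.id k _ := by
  obtain ⟨a, b, c, d, T, D, ha, hb, hc, hd, hT, hD, e1, e2, e3, e4, e5, e6, f1, f2, f3, f4,
    g1, g2, g3, g4, i1, i2⟩ := z_facts k q
  have z1 : zHom k q hq (tM k q 0 0) = _ := zHom_gen k q hq .t11
  have z2 : zHom k q hq (tM k q 0 1) = _ := zHom_gen k q hq .t12
  have z3 : zHom k q hq (tM k q 1 0) = _ := zHom_gen k q hq .t21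
  have z4 : zHom k q hq (tM k q 1 1) = _ := zHom_gen k q hq .t22
  have z5 : zHom k q hq (xiE k q) = _ := zHom_gen k q hq .xi
  obtain ⟨-, -, -, -, -, -, -, -, -, -, -, k12⟩ := gen_z q hq a b c d T D hD e1 e2 e3 e4 e5 e6 f1 f2 f3 f4 g1 g2 g3 g4 i1 i2
  apply RingQuot.ringQuot_ext'
  apply FreeAlgebra.hom_ext
  funext g
  change MulOpposite.unop (zHom k q hq (MulOpposite.unop (tHom k q hq
    (RingQuot.mkAlgHom k (GLq22Rel k q) (Zf k g))))) = 
    RingQuot.mkAlgHom k (GLq22Rel k q) (Zf k g)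
  rw [tHom_gen]
  cases g
  · change _ = zM k q 0 0
    simp only [tfun, MulOpposite.unop_op, map_mul, z4, z5, zfun, MulOpposite.unop_mul]
    rw [← ha, ← hb, ← hc, ← hd, ← hT, ← hD, hp_one i1]
  · change _ = zM k q 0 1
    simp only [tfun, MulOpposite.unop_op, map_mul, map_smul, z2, z5, zfun, MulOpposite.unop_mul,
      MulOpposite.unop_smul]
    rw [← ha, ← hb, ← hc, ← hd, ← hT, ← hD, mul_smul_comm, smul_smul, inv_mul_cancel₀ hq,
      one_smul, hp_one i1]
  · change _ = zM k q 1 0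
    simp only [tfun, MulOpposite.unop_op, map_mul, map_smul, z3, z5, zfun, MulOpposite.unop_mul,
      MulOpposite.unop_smul]
    rw [← ha, ← hb, ← hc, ← hd, ← hT, ← hD, smul_mul_assoc, smul_smul, mul_inv_cancel₀ hq,
      one_smul, mul_assoc, i2, mul_one]
  · change _ = zM k q 1 1
    simp only [tfun, MulOpposite.unop_op, map_mul, z1, z5, zfun, MulOpposite.unop_mul]
    rw [← ha, ← hb, ← hc, ← hd, ← hT, ← hD, mul_assoc, i2, mul_one]
  · change _ = tauE k q
    simp only [tfun, MulOpposite.unop_op, map_mul, map_sub, map_smul, z1, z2, z3, z4, zfun,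
      MulOpposite.unop_mul, MulOpposite.unop_sub, MulOpposite.unop_smul,
      ← ha, ← hb, ← hc, ← hd, ← hT]
    exact k12

/-- There is an anti-isomorphism of `k`-algebras `φ : GL_q(-2,2) → GL_q(2,-2)`
(a bijective `k`-linear map with `φ(1) = 1` and `φ(ab) = φ(b)φ(a)`) with
`φ(t11) = z22·τ`, `φ(t12) = q·τ·z12`, `φ(t21) = q⁻¹·z21·τ`, `φ(t22) = τ·z11` and
`φ(ξ) = z11·z22 + q⁻¹·z12·z21`. -/
theorem GLqm22_antiIso_GLq22 (k : Type) [Field k] (q : k) (hq : q ≠ 0) :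
    ∃ φ : GLqm22 k q →ₗ[k] GLq22 k q,
      Function.Bijective φ ∧
      φ 1 = 1 ∧
      (∀ a b : GLqm22 k q, φ (a * b) = φ b * φ a) ∧
      φ (tM k q 0 0) = zM k q 1 1 * tauE k q ∧
      φ (tM k q 0 1) = q • (tauE k q * zM k q 0 1) ∧
      φ (tM k q 1 0) = q⁻¹ • (zM k q 1 0 * tauE k q) ∧
      φ (tM k q 1 1) = tauE k q * zM k q 0 0 ∧
      φ (xiE k q) = zM k q 0 0 * zM k q 1 1 + q⁻¹ • (zM k q 0 1 * zM k q 1 0) := by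
  refine ⟨(MulOpposite.opLinearEquiv k).symm.toLinearMap ∘ₗ (zHom k q hq).toLinearMap,
    ?_, ?_, ?_, ?_, ?_, ?_, ?_, ?_⟩
  · refine Function.bijective_iff_has_inverse.mpr
      ⟨fun x => MulOpposite.unop (tHom k q hq x), fun x => ?_, fun x => ?_⟩
    · exact DFunLike.congr_fun (tz_id k q hq) x
    · exact DFunLike.congr_fun (zt_id k q hq) x
  · simp
  · intro a b
    simp
  · exact congrArg MulOpposite.unop (zHom_gen k q hq .t11)
  · exact congrArg MulOpposite.unop (zHom_gen k q hq .t12)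
  · exact congrArg MulOpposite.unop (zHom_gen k q hq .t21)
  · exact congrArg MulOpposite.unop (zHom_gen k q hq .t22)
  · exact congrArg MulOpposite.unop (zHom_gen k q hq .xi)


end
end

section
/- Let k be a field and let q ∈ k be nonzero. In the matrix algebra M_2(GL_q(2,-2)), the matrix z = [[z11, z12], [z21, z22]] is invertible with inverse [[z22τ, qτz12], [q^{-1}z21τ, τz11]]; that is, both products of z with this matrix equal the identity matrix. -/
noncomputable section

theorem aux_inv (k : Type) [Field k] (q : k) (hq : q ≠ 0) (A : Type) [Ring A] [Algebra k A]
    (a b c d t : A)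
    (r1 : b * a = -(q • (a * b))) (r2 : c * a = q • (a * c))
    (r3 : d * b = q • (b * d)) (r4 : d * c = -(q • (c * d)))
    (r5 : b * c = -(c * b)) (r6 : a * d + d * a = (q - q⁻¹) • (b * c))
    (r7 : a * t = -(t * a)) (r8 : d * t = -(t * d)) (r9 : b * t = -(t * b))
    (r10 : c * t = -(t * c)) (r11 : (a * d + q⁻¹ • (b * c)) * t = 1) :
    (!![a, b; c, d] * !![d * t, q • (t * b); q⁻¹ • (c * t), t * a] : Matrix (Fin 2) (Fin 2) A) = 1 ∧
    (!![d * t, q • (t * b); q⁻¹ • (c * t), t * a] * !![a, b; c, d] : Matrix (Fin 2) (Fin 2) A) = 1 := by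
  have r12 : t * (a * d) + q⁻¹ • (t * (b * c)) = 1 := by
    rw [← r11, add_mul, smul_mul_assoc, mul_assoc a, mul_assoc b, r8, r10, mul_neg, mul_neg,
      ← mul_assoc a, ← mul_assoc b, r7, r9]
    simp only [neg_mul, neg_neg, mul_assoc]
  have e : d * a = (q - q⁻¹) • (b * c) - a * d := by rw [← r6]; abel
  have e5 : c * b = -(b * c) := by rw [r5, neg_neg]
  have h1 : c * (t * b) = t * (b * c) := by
    rw [← mul_assoc, r10, neg_mul, mul_assoc, e5, mul_neg, neg_neg]
  have h2 : d * (t * a) = t * (a * d) - (q - q⁻¹) • (t * (b * c)) := by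
    rw [← mul_assoc, r8, neg_mul, mul_assoc, e, mul_sub, mul_smul_comm]; abel
  have h3 : a * (t * b) = -(t * (a * b)) := by rw [← mul_assoc, r7, neg_mul, mul_assoc]
  have h4 : b * (t * a) = q • (t * (a * b)) := by
    rw [← mul_assoc, r9, neg_mul, mul_assoc, r1, mul_neg, neg_neg, mul_smul_comm]
  have h5 : d * (c * t) = -(q • (c * (d * t))) := by
    rw [← mul_assoc, r4, neg_mul, smul_mul_assoc, mul_assoc]
  have h6 : d * (t * b) = -(q • (t * (b * d))) := by
    rw [← mul_assoc, r8, neg_mul, mul_assoc, r3, mul_smul_comm]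
  have h7 : c * (t * a) = -(q • (t * (a * c))) := by
    rw [← mul_assoc, r10, neg_mul, mul_assoc, r2, mul_smul_comm]
  have h8 : a * (d * t) + q⁻¹ • (b * (c * t)) = 1 := by
    rw [← r11, add_mul, smul_mul_assoc, mul_assoc, mul_assoc]
  have h9 : q • (t * (b * c)) + (t * (a * d) - (q - q⁻¹) • (t * (b * c))) = 1 := by
    rw [← r12, sub_smul]; abel
  rw [Matrix.mul_fin_two, Matrix.mul_fin_two, Matrix.one_fin_two]
  simp only [mul_smul_comm, smul_mul_assoc, mul_assoc, h1, h2, h3, h4, h5, h6, h7, h8, h9,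
    smul_neg, smul_smul, inv_mul_cancel₀ hq, one_smul, neg_add_cancel, add_neg_cancel]
  rw [add_comm (_ - _), h9, add_comm (q⁻¹ • _), r12]
  exact ⟨trivial, rfl⟩

/-- In `M_2(GL_q(2,-2))`, the matrix `z = [[z11, z12], [z21, z22]]` is invertible
with inverse `[[z22·τ, q·τ·z12], [q⁻¹·z21·τ, τ·z11]]`: both products equal the
identity matrix. -/
theorem GLq22_matrix_invertible (k : Type) [Field k] (q : k) (hq : q ≠ 0) :
    let z : Matrix (Fin 2) (Fin 2) (GLq22 k q) :=
      !![zM k q 0 0, zM k q 0 1; zM k q 1 0, zM k q 1 1]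
    let w : Matrix (Fin 2) (Fin 2) (GLq22 k q) :=
      !![zM k q 1 1 * tauE k q, q • (tauE k q * zM k q 0 1);
         q⁻¹ • (zM k q 1 0 * tauE k q), tauE k q * zM k q 0 0]
    z * w = 1 ∧ w * z = 1 := by
  have H : ∀ {x y}, GLq22Rel k q x y →
      RingQuot.mkAlgHom k (GLq22Rel k q) x = RingQuot.mkAlgHom k (GLq22Rel k q) y :=
    fun h => RingQuot.mkAlgHom_rel k h
  have r1 := H .r1
  have r2 := H .r2
  have r3 := H .r3
  have r4 := H .r4
  have r5 := H .r5
  have r6 := H .r6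
  have r7 := H .r7
  have r8 := H .r8
  have r9 := H .r9
  have r10 := H .r10
  have r11 := H .r11
  simp only [map_mul, map_add, map_neg, map_smul, map_one] at r1 r2 r3 r4 r5 r6 r7 r8 r9 r10 r11
  exact aux_inv k q hq (GLq22 k q) _ _ _ _ _ r1 r2 r3 r4 r5 r6 r7 r8 r9 r10 r11

end
end

section
/- Let k be a field and let A be a Hopf algebra over k admitting a Haar measure, i.e. a linear map J : A → k with J(1_A) = 1 and (id_A ⊗ J) ∘ Δ = u_A ∘ J. Let Z be an A-Galois extension of k. Then there exists a unique Haar measure on Z, i.e. a unique linear map μ : Z → k such that (id_A ⊗ μ) ∘ α_Z = u_A ∘ μ and μ(1_Z) = 1. -/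
open TensorProduct

namespace HaarAux
open WithConv LinearMap

section
variable {k A : Type} [Field k] [Ring A] [HopfAlgebra k A]


lemma one_comp (h : A →ₐ[k] A ⊗[k] A) :
    toConv (h.toLinearMap ∘ₗ (1 : WithConv (A →ₗ[k] A)).ofConv) = 1 := by
  ext a
  simp [LinearMap.convOne_def]

lemma mulc (h : A →ₐ[k] A ⊗[k] A) (f g : A →ₗ[k] A) :
    toConv (h.toLinearMap ∘ₗ (toConv f * toConv g).ofConv) =
      toConv (h.toLinearMap ∘ₗ f) * toConv (h.toLinearMap ∘ₗ g) := by
  have := algHom_comp_convMul_distrib h (toConv f) (toConv g)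
  simpa using congr(toConv $this)

lemma comul_eq : toConv ((Bialgebra.comulAlgHom k A).toLinearMap) = toConv ((Algebra.TensorProduct.includeLeft : A →ₐ[k] A ⊗[k] A).toLinearMap) * toConv ((Algebra.TensorProduct.includeRight : A →ₐ[k] A ⊗[k] A).toLinearMap) := by
  ext a
  rw [Coalgebra.Repr.convMul_apply (Coalgebra.Repr.arbitrary k a)]
  simp [(Coalgebra.Repr.arbitrary k a).eq]

lemma key : toConv ((Bialgebra.comulAlgHom k A).toLinearMap ∘ₗ (HopfAlgebra.antipode k (A := A))) * toConv ((Algebra.TensorProduct.includeLeft : A →ₐ[k] A ⊗[k] A).toLinearMap) =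
    toConv ((Algebra.TensorProduct.includeRight : A →ₐ[k] A ⊗[k] A).toLinearMap ∘ₗ (HopfAlgebra.antipode k (A := A))) := by
  have h1 : toConv ((Bialgebra.comulAlgHom k A).toLinearMap ∘ₗ (HopfAlgebra.antipode k (A := A))) * toConv ((Bialgebra.comulAlgHom k A).toLinearMap) = 1 := by
    have := mulc (Bialgebra.comulAlgHom k A) (HopfAlgebra.antipode k (A := A)) LinearMap.id
    rw [antipode_mul_id, one_comp] at this
    simpa using this.symm
  have h2 : toConv ((Algebra.TensorProduct.includeRight : A →ₐ[k] A ⊗[k] A).toLinearMap) * toConv ((Algebra.TensorProduct.includeRight : A →ₐ[k] A ⊗[k] A).toLinearMap ∘ₗ (HopfAlgebra.antipode k (A := A))) = 1 := by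
    have := mulc (Algebra.TensorProduct.includeRight : A →ₐ[k] A ⊗[k] A) LinearMap.id (HopfAlgebra.antipode k (A := A))
    rw [id_mul_antipode, one_comp] at this
    simpa using this.symm
  calc _ = toConv ((Bialgebra.comulAlgHom k A).toLinearMap ∘ₗ (HopfAlgebra.antipode k (A := A))) *
        (toConv ((Algebra.TensorProduct.includeLeft : A →ₐ[k] A ⊗[k] A).toLinearMap) * (toConv ((Algebra.TensorProduct.includeRight : A →ₐ[k] A ⊗[k] A).toLinearMap) * toConv ((Algebra.TensorProduct.includeRight : A →ₐ[k] A ⊗[k] A).toLinearMap ∘ₗ (HopfAlgebra.antipode k (A := A))))) := by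
          rw [h2, mul_one]
    _ = _ := by rw [← mul_assoc (toConv ((Algebra.TensorProduct.includeLeft : A →ₐ[k] A ⊗[k] A).toLinearMap)), ← comul_eq, ← mul_assoc, h1, one_mul]

lemma rinvS (J : A →ₗ[k] k)
    (hJinv : ∀ a : A,
      (TensorProduct.rid k A)
          (TensorProduct.map (LinearMap.id (M := A)) J (Coalgebra.comul (R := k) a)) =
        algebraMap k A (J a))
    (a : A) : (TensorProduct.lid k A)
    (TensorProduct.map (J ∘ₗ (HopfAlgebra.antipode k (A := A))) (LinearMap.id (M := A)) (Coalgebra.comul (R := k) a)) =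
      algebraMap k A (J ((HopfAlgebra.antipode k (A := A)) a)) := by
  have h := congr((TensorProduct.rid k A) (TensorProduct.map (LinearMap.id (M := A)) J
    ($(key (k := k) (A := A)).ofConv a)))
  rw [Coalgebra.Repr.convMul_apply (Coalgebra.Repr.arbitrary k a)] at h
  have h3 : ∀ (t : A ⊗[k] A) (b : A), (TensorProduct.rid k A)
      (TensorProduct.map (LinearMap.id (M := A)) J (t * (b ⊗ₜ 1))) =
      (TensorProduct.rid k A) (TensorProduct.map (LinearMap.id (M := A)) J t) * b := by
    intro t b
    induction t with
    | zero => simp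
    | tmul x y => simp
    | add x y hx hy => simp [add_mul, hx, hy]
  simp only [map_sum] at h
  simp [h3, hJinv] at h
  rw [← (Coalgebra.Repr.arbitrary k a).eq]
  simp [Algebra.smul_def, h]

lemma rinv (J : A →ₗ[k] k) (hJ1 : J 1 = 1)
    (hJinv : ∀ a : A,
      (TensorProduct.rid k A)
          (TensorProduct.map (LinearMap.id (M := A)) J (Coalgebra.comul (R := k) a)) =
        algebraMap k A (J a))
    (a : A) : (TensorProduct.lid k A)
    (TensorProduct.map J (LinearMap.id (M := A)) (Coalgebra.comul (R := k) a)) =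
      algebraMap k A (J a) := by
  have e : J ∘ₗ (HopfAlgebra.antipode k (A := A)) = J := by
    ext a
    have h1 := congr(J $(rinvS J hJinv a))
    have h2 := congr(J ((HopfAlgebra.antipode k (A := A)) $(hJinv a)))
    rw [← (Coalgebra.Repr.arbitrary k a).eq] at h1 h2
    simp [Algebra.algebraMap_eq_smul_one, hJ1] at h1 h2
    rw [LinearMap.comp_apply, ← h1, ← h2]
    exact Finset.sum_congr rfl fun _ _ => mul_comm _ _
  have := rinvS J hJinv a
  rw [← LinearMap.comp_apply J, e] at this
  exact this
end

lemma dual {k Z : Type} [Field k] [Ring Z] [Algebra k Z] [Nontrivial Z] :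
    ∃ f : Z →ₗ[k] k, f 1 = 1 := by
  obtain ⟨f, hf⟩ := LinearMap.exists_leftInverse_of_injective (Algebra.linearMap k Z)
    (LinearMap.ker_eq_bot.2 (algebraMap k Z).injective)
  exact ⟨f, by simpa using congr($hf 1)⟩

lemma scalar {k Z : Type} [Field k] [Ring Z] [Algebra k Z] [Nontrivial Z] (z : Z)
    (h : z ⊗ₜ[k] (1 : Z) = (1 : Z) ⊗ₜ[k] z) : ∃ c : k, z = algebraMap k Z c := by
  obtain ⟨f, hf⟩ := dual (k := k) (Z := Z)
  have := congr(TensorProduct.rid k Z (TensorProduct.map LinearMap.id f $h))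
  exact ⟨f z, by simpa [hf, Algebra.algebraMap_eq_smul_one] using this⟩

end HaarAux



/-- Let `A` be a Hopf algebra over a field `k` admitting a Haar measure
`J : A → k` (i.e. `J(1) = 1` and `(id_A ⊗ J) ∘ Δ = u_A ∘ J`), and let `Z` be an
`A`-Galois extension of `k`. Then there is a unique Haar measure on `Z`: a unique
linear map `μ : Z → k` with `μ(1) = 1` and `(id_A ⊗ μ) ∘ α_Z = u_A ∘ μ`. -/
theorem Galois_extension_haar_measure_exists_unique
    (k : Type) [Field k]
    (A : Type) [Ring A] [HopfAlgebra k A]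
    (J : A →ₗ[k] k) (hJ1 : J 1 = 1)
    (hJinv : ∀ a : A,
      (TensorProduct.rid k A)
          (TensorProduct.map (LinearMap.id (M := A)) J (Coalgebra.comul (R := k) a)) =
        algebraMap k A (J a))
    (Z : Type) [Ring Z] [Algebra k Z] [Nontrivial Z]
    (αZ : Z →ₐ[k] A ⊗[k] Z)
    -- coassociativity: `(Δ ⊗ id) ∘ α_Z = (id ⊗ α_Z) ∘ α_Z`
    (hcoassoc :
      (TensorProduct.assoc k A A Z).toLinearMap ∘ₗ
          (TensorProduct.map (Coalgebra.comul (R := k) (A := A)) (LinearMap.id (M := Z))) ∘ₗ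
          αZ.toLinearMap =
        (TensorProduct.map (LinearMap.id (M := A)) αZ.toLinearMap) ∘ₗ αZ.toLinearMap)
    -- counit axiom: `(ε ⊗ id) ∘ α_Z = id`
    (hcounit :
      (TensorProduct.lid k Z).toLinearMap ∘ₗ
          (TensorProduct.map (Coalgebra.counit (R := k) (A := A)) (LinearMap.id (M := Z))) ∘ₗ
          αZ.toLinearMap =
        LinearMap.id)
    -- the Galois map `(id_A ⊗ m_Z) ∘ (α_Z ⊗ id_Z)` is bijective
    (hGalois :
      Function.Bijective
        ((TensorProduct.map LinearMap.id (LinearMap.mul' k Z)) ∘ₗ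
          (TensorProduct.assoc k A Z Z).toLinearMap ∘ₗ
          (TensorProduct.map αZ.toLinearMap LinearMap.id))) :
    ∃! μ : Z →ₗ[k] k,
      μ 1 = 1 ∧
      ∀ z : Z,
        (TensorProduct.rid k A)
            (TensorProduct.map (LinearMap.id (M := A)) μ (αZ z)) =
          algebraMap k A (μ z) := by
  let E : Z →ₗ[k] Z := (TensorProduct.lid k Z).toLinearMap ∘ₗ
    TensorProduct.map J LinearMap.id ∘ₗ αZ.toLinearMap
  have hE : ∀ z, E z = TensorProduct.lid k Z (TensorProduct.map J LinearMap.id (αZ z)) :=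
    fun _ => rfl
  have hco : ∀ z, αZ (E z) = 1 ⊗ₜ E z := by
    intro z
    have h := congr(TensorProduct.lid k (A ⊗[k] Z)
      (TensorProduct.map J LinearMap.id ($hcoassoc z)))
    simp only [LinearMap.comp_apply, LinearEquiv.coe_coe, AlgHom.toLinearMap_apply] at h
    have h1 : ∀ t : A ⊗[k] Z, TensorProduct.lid k (A ⊗[k] Z)
        (TensorProduct.map J LinearMap.id (TensorProduct.map LinearMap.id αZ.toLinearMap t)) =
        αZ (TensorProduct.lid k Z (TensorProduct.map J LinearMap.id t)) := by
      intro t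
      induction t with
      | zero => simp
      | tmul x y => simp
      | add x y hx hy => simp only [map_add, hx, hy]
    have h2 : ∀ t : A ⊗[k] Z, TensorProduct.lid k (A ⊗[k] Z)
        (TensorProduct.map J LinearMap.id (TensorProduct.assoc k A A Z
          (TensorProduct.map (Coalgebra.comul (R := k) (A := A)) LinearMap.id t))) =
        1 ⊗ₜ (TensorProduct.lid k Z (TensorProduct.map J LinearMap.id t)) := by
      intro t
      induction t with
      | zero => simp
      | tmul x y =>
        have h3 : ∀ s : A ⊗[k] A, TensorProduct.lid k (A ⊗[k] Z)
            (TensorProduct.map J LinearMap.id (TensorProduct.assoc k A A Z (s ⊗ₜ y))) =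
            (TensorProduct.lid k A (TensorProduct.map J LinearMap.id s)) ⊗ₜ y := by
          intro s
          induction s with
          | zero => simp
          | tmul x y => simp [TensorProduct.smul_tmul']
          | add x y hx hy => simp only [map_add, TensorProduct.add_tmul, hx, hy]
        rw [TensorProduct.map_tmul, LinearMap.id_apply, h3, HaarAux.rinv J hJ1 hJinv]
        simp [Algebra.algebraMap_eq_smul_one, TensorProduct.smul_tmul]
      | add x y hx hy => simp only [map_add, TensorProduct.tmul_add, hx, hy]
    rw [h1, h2] at h
    exact h.symm
  have hsc : ∀ z, ∃ c : k, E z = algebraMap k Z c := by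
    intro z
    apply HaarAux.scalar
    apply hGalois.1
    simp [hco, Algebra.TensorProduct.one_def]
  obtain ⟨f, hf⟩ := HaarAux.dual (k := k) (Z := Z)
  have hfE : ∀ z, E z = f (E z) • 1 := by
    intro z
    obtain ⟨c, hc⟩ := hsc z
    rw [hc]
    simp [Algebra.algebraMap_eq_smul_one, hf]
  have hE1 : E 1 = 1 := by
    simp [hE, Algebra.TensorProduct.one_def, hJ1]
  refine ⟨f ∘ₗ E, ⟨by simp [hE1, hf], ?_⟩, ?_⟩
  · intro z
    have h := congr(TensorProduct.rid k A (TensorProduct.map LinearMap.id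
      (f ∘ₗ (TensorProduct.lid k Z).toLinearMap ∘ₗ TensorProduct.map J LinearMap.id)
      ($hcoassoc z)))
    simp only [LinearMap.comp_apply, LinearEquiv.coe_coe, AlgHom.toLinearMap_apply] at h
    have h1 : ∀ t : A ⊗[k] Z, TensorProduct.rid k A (TensorProduct.map LinearMap.id
        (f ∘ₗ (TensorProduct.lid k Z).toLinearMap ∘ₗ TensorProduct.map J LinearMap.id)
        (TensorProduct.map LinearMap.id αZ.toLinearMap t)) =
        TensorProduct.rid k A (TensorProduct.map LinearMap.id (f ∘ₗ E) t) := by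
      intro t
      induction t with
      | zero => simp
      | tmul x y => simp [E]
      | add x y hx hy => simp only [map_add, hx, hy]
    have h2 : ∀ t : A ⊗[k] Z, TensorProduct.rid k A (TensorProduct.map LinearMap.id
        (f ∘ₗ (TensorProduct.lid k Z).toLinearMap ∘ₗ TensorProduct.map J LinearMap.id)
        (TensorProduct.assoc k A A Z
          (TensorProduct.map (Coalgebra.comul (R := k) (A := A)) LinearMap.id t))) =
        algebraMap k A (f (TensorProduct.lid k Z (TensorProduct.map J LinearMap.id t))) := by
      intro t
      induction t with
      | zero => simp
      | tmul x y =>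
        have h3 : ∀ s : A ⊗[k] A, TensorProduct.rid k A (TensorProduct.map LinearMap.id
            (f ∘ₗ (TensorProduct.lid k Z).toLinearMap ∘ₗ TensorProduct.map J LinearMap.id)
            (TensorProduct.assoc k A A Z (s ⊗ₜ y))) =
            f y • (TensorProduct.rid k A (TensorProduct.map LinearMap.id J s)) := by
          intro s
          induction s with
          | zero => simp
          | tmul x y => simp [smul_smul, mul_comm]
          | add x y hx hy => simp only [map_add, TensorProduct.add_tmul, hx, hy, smul_add]
        rw [TensorProduct.map_tmul, LinearMap.id_apply, h3, hJinv]
        simp [Algebra.algebraMap_eq_smul_one, smul_smul, mul_comm]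
      | add x y hx hy => simp only [map_add, hx, hy]
    rw [h1, h2] at h
    exact h.symm
  · rintro ν ⟨hν1, hν⟩
    ext z
    have h1 := congr(J $(hν z))
    have h2 := congr(ν $(hfE z))
    have h3 : ∀ t : A ⊗[k] Z, J (TensorProduct.rid k A (TensorProduct.map LinearMap.id ν t)) =
        ν (TensorProduct.lid k Z (TensorProduct.map J LinearMap.id t)) := by
      intro t
      induction t with
      | zero => simp
      | tmul x y => simp [mul_comm]
      | add x y hx hy => simp only [map_add, hx, hy]
    rw [h3, ← hE, h2] at h1
    simpa [Algebra.algebraMap_eq_smul_one, hJ1, hν1] using h1.symm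
end

section
/- Let A be a Hopf *-algebra over ℂ admitting a Haar measure J : A → ℂ that is positive and faithful (J(a*a) ≥ 0 for all a, and J(a*a) > 0 whenever a ≠ 0). Let Z be an A-*-Galois extension, and assume there exists a linear map ψ : Z → ℂ with ψ(z*z) ≥ 0 for all z ∈ Z and ψ(1_Z) = 1. Then there exists a positive Haar measure on Z, i.e. a Haar measure μ : Z → ℂ with μ(z*z) ≥ 0 for all z ∈ Z. -/
open TensorProduct ComplexOrder

lemma aux_sigma (σ : ℂ → ℂ) (hadd : ∀ x y, σ (x + y) = σ x + σ y) (h1 : σ 1 = 1)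
    (hp : ∀ c, 0 ≤ σ c * c) (c : ℂ) : σ c = star c := by
  have him : ∀ c : ℂ, (σ c).im = - c.im := by
    intro c
    have e1 := (Complex.le_def.1 (hp c)).2
    have e2 := (Complex.le_def.1 (hp (c + 1))).2
    rw [hadd, h1] at e2
    simp at e1 e2
    linarith
  have hre : ∀ c : ℂ, c.im ≠ 0 → (σ c).re = c.re := by
    intro c hc
    have e1 := (Complex.le_def.1 (hp c)).2
    have e2 := him c
    simp [e2] at e1
    apply mul_right_cancel₀ hc
    linarith
  apply Complex.ext
  · by_cases hc : c.im = 0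
    · have h2 := hre (c + Complex.I) (by simp [hc])
      have h3 := hre Complex.I (by simp)
      rw [hadd] at h2
      simp at h2 h3
      simp
      linarith
    · simpa using hre c hc
  · simpa using him c

lemma aux_herm {B : Type} [Ring B] [Algebra ℂ B] [StarRing B] [StarModule ℂ B]
    (f : B →ₗ[ℂ] ℂ) (hf : ∀ b, 0 ≤ f (star b * b)) (a b : B) :
    star (f (star a * b)) = f (star b * a) := by
  have e0 := (Complex.le_def.1 (hf a)).2
  have e1 := (Complex.le_def.1 (hf b)).2
  have e2 := (Complex.le_def.1 (hf (a + b))).2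
  have e3 := (Complex.le_def.1 (hf (a + Complex.I • b))).2
  simp [add_mul, mul_add] at e0 e1 e2 e3
  apply Complex.ext <;> simp <;> linarith

lemma aux_psd {B ι : Type} [Fintype ι] [Ring B] [Algebra ℂ B] [StarRing B] [StarModule ℂ B]
    (f : B →ₗ[ℂ] ℂ) (hf : ∀ b, 0 ≤ f (star b * b)) (b : ι → B) :
    (Matrix.of fun i j => f (star (b i) * b j)).PosSemidef := by
  apply Matrix.PosSemidef.of_dotProduct_mulVec_nonneg
  · ext i j
    simp only [Matrix.conjTranspose_apply, Matrix.of_apply]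
    exact aux_herm f hf _ _
  · intro x
    have := hf (∑ i, x i • b i)
    rw [star_sum, Finset.sum_mul_sum] at this
    convert this using 1
    simp only [map_sum, star_smul, smul_mul_smul_comm, map_smul,
      dotProduct, Matrix.mulVec, Matrix.of_apply, Finset.mul_sum, Pi.star_apply, smul_eq_mul]
    refine Finset.sum_congr rfl fun i _ => Finset.sum_congr rfl fun j _ => by ring

lemma aux_pos {B C ι : Type} [Fintype ι] [Ring B] [Algebra ℂ B] [StarRing B] [StarModule ℂ B]
    [Ring C] [Algebra ℂ C] [StarRing C] [StarModule ℂ C]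
    (f : B →ₗ[ℂ] ℂ) (hf : ∀ b, 0 ≤ f (star b * b))
    (g : C →ₗ[ℂ] ℂ) (hg : ∀ b, 0 ≤ g (star b * b)) (b : ι → B) (c : ι → C) :
    0 ≤ ∑ i, ∑ j, f (star (b i) * b j) * g (star (c i) * c j) := by
  have h := ((aux_psd f hf b).hadamard (aux_psd g hg c)).dotProduct_mulVec_nonneg (fun _ => 1)
  simpa [dotProduct, Matrix.mulVec] using h

/-- Let `A` be a Hopf *-algebra over `ℂ` (the comultiplication is a
*-homomorphism, where the star on `A ⊗ A` is `(a ⊗ b)* = a* ⊗ b*`) admitting a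
positive faithful Haar measure `J`.  Let `Z` be an `A`-*-Galois extension and
assume there is a linear map `ψ : Z → ℂ` with `ψ(z*z) ≥ 0` for all `z` and
`ψ(1) = 1`.  Then there exists a positive Haar measure on `Z`. -/
theorem star_Galois_extension_positive_haar_exists
    (A : Type) [Ring A] [HopfAlgebra ℂ A] [StarRing A]
    -- the star on `A ⊗ A`, as the (unique) additive map with `(a ⊗ b)* = a* ⊗ b*`
    (SA : A ⊗[ℂ] A → A ⊗[ℂ] A)
    (hSAadd : ∀ u v, SA (u + v) = SA u + SA v)
    (hSAtmul : ∀ a b : A, SA (a ⊗ₜ[ℂ] b) = star a ⊗ₜ[ℂ] star b)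
    -- the comultiplication is a *-homomorphism
    (hcomul_star : ∀ a : A,
      Coalgebra.comul (R := ℂ) (star a) = SA (Coalgebra.comul (R := ℂ) a))
    -- a positive faithful Haar measure on `A`
    (J : A →ₗ[ℂ] ℂ) (hJ1 : J 1 = 1)
    (hJinv : ∀ a : A,
      (TensorProduct.rid ℂ A)
          (TensorProduct.map (LinearMap.id (M := A)) J (Coalgebra.comul (R := ℂ) a)) =
        algebraMap ℂ A (J a))
    (hJpos : ∀ a : A, 0 ≤ J (star a * a))
    (hJfaithful : ∀ a : A, a ≠ 0 → 0 < J (star a * a))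
    -- `Z` is an `A`-*-Galois extension
    (Z : Type) [Ring Z] [Algebra ℂ Z] [StarRing Z] [Nontrivial Z]
    (αZ : Z →ₐ[ℂ] A ⊗[ℂ] Z)
    (hcoassoc :
      (TensorProduct.assoc ℂ A A Z).toLinearMap ∘ₗ
          (TensorProduct.map (Coalgebra.comul (R := ℂ) (A := A)) (LinearMap.id (M := Z))) ∘ₗ
          αZ.toLinearMap =
        (TensorProduct.map (LinearMap.id (M := A)) αZ.toLinearMap) ∘ₗ αZ.toLinearMap)
    (hcounit :
      (TensorProduct.lid ℂ Z).toLinearMap ∘ₗ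
          (TensorProduct.map (Coalgebra.counit (R := ℂ) (A := A)) (LinearMap.id (M := Z))) ∘ₗ
          αZ.toLinearMap =
        LinearMap.id)
    (hGalois :
      Function.Bijective
        ((TensorProduct.map LinearMap.id (LinearMap.mul' ℂ Z)) ∘ₗ
          (TensorProduct.assoc ℂ A Z Z).toLinearMap ∘ₗ
          (TensorProduct.map αZ.toLinearMap LinearMap.id)))
    -- the star on `A ⊗ Z`, and `α_Z` is a *-homomorphism
    (SZ : A ⊗[ℂ] Z → A ⊗[ℂ] Z)
    (hSZadd : ∀ u v, SZ (u + v) = SZ u + SZ v)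
    (hSZtmul : ∀ (a : A) (z : Z), SZ (a ⊗ₜ[ℂ] z) = star a ⊗ₜ[ℂ] star z)
    (hαZstar : ∀ z : Z, αZ (star z) = SZ (αZ z))
    -- a positive normalized linear functional on `Z`
    (ψ : Z →ₗ[ℂ] ℂ) (hψpos : ∀ z : Z, 0 ≤ ψ (star z * z)) (hψ1 : ψ 1 = 1) :
    ∃ μ : Z →ₗ[ℂ] ℂ,
      μ 1 = 1 ∧
      (∀ z : Z,
        (TensorProduct.rid ℂ A)
            (TensorProduct.map (LinearMap.id (M := A)) μ (αZ z)) =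
          algebraMap ℂ A (μ z)) ∧
      ∀ z : Z, 0 ≤ μ (star z * z) := by
  have hstar1 : ∀ c : ℂ, star (algebraMap ℂ A c) = algebraMap ℂ A (J (star (algebraMap ℂ A c))) := by
    intro c
    have h : (star (algebraMap ℂ A c)) ⊗ₜ[ℂ] (1 : A) = (1 : A) ⊗ₜ[ℂ] star (algebraMap ℂ A c) := by
      have h1 := hSAtmul (algebraMap ℂ A c) 1
      have h2 := hSAtmul 1 (algebraMap ℂ A c)
      rw [star_one] at h1 h2
      rw [← h1, ← h2]
      simp [Algebra.algebraMap_eq_smul_one, TensorProduct.smul_tmul]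
    have h3 := congrArg (fun t => TensorProduct.lid ℂ A (TensorProduct.map J LinearMap.id t)) h
    simp [hJ1] at h3
    rw [← h3, Algebra.algebraMap_eq_smul_one, Algebra.algebraMap_eq_smul_one]
    simp [hJ1]
  have hJa : ∀ c, J (algebraMap ℂ A c) = c := by
    intro c; simp [Algebra.algebraMap_eq_smul_one, hJ1]
  have hσ : ∀ c : ℂ, J (star (algebraMap ℂ A c)) = star c := by
    apply aux_sigma
    · intro x y; simp
    · simp [hJ1]
    · intro c
      have := hJpos (algebraMap ℂ A c)
      rw [hstar1, ← map_mul, hJa] at this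
      exact this
  have hA : ∀ c : ℂ, star (algebraMap ℂ A c) = algebraMap ℂ A (star c) := by
    intro c; rw [hstar1, hσ]
  have hZ : ∀ c : ℂ, star (algebraMap ℂ Z c) = algebraMap ℂ Z (star c) := by
    intro c
    have h : (star (algebraMap ℂ A c)) ⊗ₜ[ℂ] (1 : Z) = (1 : A) ⊗ₜ[ℂ] star (algebraMap ℂ Z c) := by
      have h1 := hSZtmul (algebraMap ℂ A c) 1
      have h2 := hSZtmul 1 (algebraMap ℂ Z c)
      rw [star_one] at h1 h2
      rw [← h1, ← h2]
      simp [Algebra.algebraMap_eq_smul_one, TensorProduct.smul_tmul]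
    have h3 := congrArg (fun t => TensorProduct.lid ℂ Z (TensorProduct.map J LinearMap.id t)) h
    simp only [TensorProduct.map_tmul, TensorProduct.lid_tmul, hJ1, hσ, one_smul,
      LinearMap.id_coe, id_eq] at h3
    rw [← h3, Algebra.algebraMap_eq_smul_one]
  haveI : StarModule ℂ A := ⟨fun c a => by
    rw [Algebra.smul_def, star_mul, hA, Algebra.smul_def, Algebra.commutes]⟩
  haveI : StarModule ℂ Z := ⟨fun c a => by
    rw [Algebra.smul_def, star_mul, hZ, Algebra.smul_def, Algebra.commutes]⟩
  let μ : Z →ₗ[ℂ] ℂ := (TensorProduct.lid ℂ ℂ).toLinearMap ∘ₗ TensorProduct.map J ψ ∘ₗ αZ.toLinearMap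
  refine ⟨μ, ?_, ?_, ?_⟩
  · simp [μ, Algebra.TensorProduct.one_def, hJ1, hψ1]
  · intro z
    have hc := congrArg (fun φ => φ z) hcoassoc
    simp only [LinearMap.comp_apply, LinearEquiv.coe_coe, AlgHom.toLinearMap_apply] at hc
    have e1 : TensorProduct.map (LinearMap.id (M := A)) μ (αZ z)
        = TensorProduct.map (LinearMap.id (M := A))
          ((TensorProduct.lid ℂ ℂ).toLinearMap ∘ₗ TensorProduct.map J ψ)
          (TensorProduct.map (LinearMap.id (M := A)) αZ.toLinearMap (αZ z)) := by
      rw [← LinearMap.comp_apply, ← TensorProduct.map_comp]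
      rfl
    have e2 : ∀ (t : A ⊗[ℂ] Z), (TensorProduct.rid ℂ A) (TensorProduct.map (LinearMap.id (M := A))
          ((TensorProduct.lid ℂ ℂ).toLinearMap ∘ₗ TensorProduct.map J ψ)
          (TensorProduct.assoc ℂ A A Z (TensorProduct.map (Coalgebra.comul (R := ℂ) (A := A))
            (LinearMap.id (M := Z)) t))) =
          algebraMap ℂ A ((TensorProduct.lid ℂ ℂ) (TensorProduct.map J ψ t)) := by
      intro t
      induction t with
      | zero => simp
      | add x y hx hy => simp only [map_add, hx, hy]
      | tmul a z =>
        have e3 : ∀ (u : A ⊗[ℂ] A), (TensorProduct.rid ℂ A) (TensorProduct.map (LinearMap.id (M := A))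
          ((TensorProduct.lid ℂ ℂ).toLinearMap ∘ₗ TensorProduct.map J ψ)
          (TensorProduct.assoc ℂ A A Z (u ⊗ₜ z))) = ψ z • (TensorProduct.rid ℂ A)
          (TensorProduct.map (LinearMap.id (M := A)) J u) := by
          intro u
          induction u with
          | zero => simp
          | add x y hx hy => simp only [map_add, TensorProduct.add_tmul, hx, hy, smul_add]
          | tmul a b => simp [smul_smul, mul_comm]
        simp only [TensorProduct.map_tmul, LinearMap.id_coe, id_eq, e3, hJinv]
        simp [Algebra.algebraMap_eq_smul_one, smul_smul, mul_comm]
    rw [e1, ← hc, e2]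
    rfl
  · intro z
    obtain ⟨S, hS⟩ := TensorProduct.exists_finset (αZ z)
    let SZ' : A ⊗[ℂ] Z →+ A ⊗[ℂ] Z := AddMonoidHom.mk' SZ hSZadd
    have hs : αZ (star z * z) = ∑ i : S, ∑ j : S,
        (star i.1.1 * j.1.1) ⊗ₜ[ℂ] (star i.1.2 * j.1.2) := by
      rw [map_mul, hαZstar]
      change SZ' (αZ z) * _ = _
      rw [hS, map_sum, ← Finset.sum_coe_sort S, ← Finset.sum_coe_sort S, Finset.sum_mul_sum]
      refine Finset.sum_congr rfl fun i _ => Finset.sum_congr rfl fun j _ => ?_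
      change SZ _ * _ = _
      rw [hSZtmul, Algebra.TensorProduct.tmul_mul_tmul]
    have := aux_pos J hJpos ψ hψpos (fun i : S => i.1.1) (fun i : S => i.1.2)
    convert this using 1
    simp [μ, hs, -map_mul]
end

section
/- Let A be a Hopf *-algebra over ℂ admitting a Haar measure J : A → ℂ that is positive and faithful (J(a*a) ≥ 0 for all a, and J(a*a) > 0 whenever a ≠ 0) [equivalently, A is a unitarizable Hopf *-algebra]. Let Z be an A-*-Galois extension and let μ be a positive Haar measure on Z (μ(z*z) ≥ 0 for all z). Then μ is faithful: μ(z*z) > 0 for every nonzero z ∈ Z. -/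
open TensorProduct ComplexOrder

/-- Let `A` be a Hopf *-algebra over `ℂ` (the comultiplication is a
*-homomorphism, where the star on `A ⊗ A` is `(a ⊗ b)* = a* ⊗ b*`) admitting a
positive faithful Haar measure `J`.  Let `Z` be an `A`-*-Galois extension and
let `μ` be a positive Haar measure on `Z`.  Then `μ` is faithful:
`μ(z*z) > 0` for every nonzero `z ∈ Z`. -/
theorem star_Galois_extension_positive_haar_is_faithful
    (A : Type) [Ring A] [HopfAlgebra ℂ A] [StarRing A]
    -- the star on `A ⊗ A`, as the (unique) additive map with `(a ⊗ b)* = a* ⊗ b*`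
    (SA : A ⊗[ℂ] A → A ⊗[ℂ] A)
    (hSAadd : ∀ u v, SA (u + v) = SA u + SA v)
    (hSAtmul : ∀ a b : A, SA (a ⊗ₜ[ℂ] b) = star a ⊗ₜ[ℂ] star b)
    -- the comultiplication is a *-homomorphism
    (hcomul_star : ∀ a : A,
      Coalgebra.comul (R := ℂ) (star a) = SA (Coalgebra.comul (R := ℂ) a))
    -- a positive faithful Haar measure on `A`
    (J : A →ₗ[ℂ] ℂ) (hJ1 : J 1 = 1)
    (hJinv : ∀ a : A,
      (TensorProduct.rid ℂ A)
          (TensorProduct.map (LinearMap.id (M := A)) J (Coalgebra.comul (R := ℂ) a)) =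
        algebraMap ℂ A (J a))
    (hJpos : ∀ a : A, 0 ≤ J (star a * a))
    (hJfaithful : ∀ a : A, a ≠ 0 → 0 < J (star a * a))
    -- `Z` is an `A`-*-Galois extension
    (Z : Type) [Ring Z] [Algebra ℂ Z] [StarRing Z] [Nontrivial Z]
    (αZ : Z →ₐ[ℂ] A ⊗[ℂ] Z)
    (hcoassoc :
      (TensorProduct.assoc ℂ A A Z).toLinearMap ∘ₗ
          (TensorProduct.map (Coalgebra.comul (R := ℂ) (A := A)) (LinearMap.id (M := Z))) ∘ₗ
          αZ.toLinearMap =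
        (TensorProduct.map (LinearMap.id (M := A)) αZ.toLinearMap) ∘ₗ αZ.toLinearMap)
    (hcounit :
      (TensorProduct.lid ℂ Z).toLinearMap ∘ₗ
          (TensorProduct.map (Coalgebra.counit (R := ℂ) (A := A)) (LinearMap.id (M := Z))) ∘ₗ
          αZ.toLinearMap =
        LinearMap.id)
    (hGalois :
      Function.Bijective
        ((TensorProduct.map LinearMap.id (LinearMap.mul' ℂ Z)) ∘ₗ
          (TensorProduct.assoc ℂ A Z Z).toLinearMap ∘ₗ
          (TensorProduct.map αZ.toLinearMap LinearMap.id)))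
    -- the star on `A ⊗ Z`, and `α_Z` is a *-homomorphism
    (SZ : A ⊗[ℂ] Z → A ⊗[ℂ] Z)
    (hSZadd : ∀ u v, SZ (u + v) = SZ u + SZ v)
    (hSZtmul : ∀ (a : A) (z : Z), SZ (a ⊗ₜ[ℂ] z) = star a ⊗ₜ[ℂ] star z)
    (hαZstar : ∀ z : Z, αZ (star z) = SZ (αZ z))
    -- a positive Haar measure `μ` on `Z`
    (μ : Z →ₗ[ℂ] ℂ) (hμ1 : μ 1 = 1)
    (hμinv : ∀ z : Z,
      (TensorProduct.rid ℂ A)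
          (TensorProduct.map (LinearMap.id (M := A)) μ (αZ z)) =
        algebraMap ℂ A (μ z))
    (hμpos : ∀ z : Z, 0 ≤ μ (star z * z)) :
    -- then `μ` is faithful
    ∀ z : Z, z ≠ 0 → 0 < μ (star z * z) := by
  classical
  -- the two conjugation scalars
  set s : ℂ := J (star (Complex.I • (1 : A))) with hs
  have hstar1 : star (Complex.I • (1 : Z)) = s • (1 : Z) := by
    have h1 : SZ ((Complex.I • (1 : A)) ⊗ₜ[ℂ] (1 : Z)) = SZ ((1 : A) ⊗ₜ[ℂ] (Complex.I • (1 : Z))) := by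
      rw [TensorProduct.smul_tmul]
    rw [hSZtmul, hSZtmul, star_one, star_one] at h1
    have h2 := congrArg (fun u => TensorProduct.lid ℂ Z
      (TensorProduct.map J (LinearMap.id (M := Z)) u)) h1
    simp only [TensorProduct.map_tmul, LinearMap.id_apply, TensorProduct.lid_tmul, hJ1,
      one_smul] at h2
    exact h2.symm
  have hsq : s * s = -1 := by
    have h1 : star ((Complex.I • (1 : Z)) * (Complex.I • (1 : Z))) = -1 := by
      rw [smul_mul_smul_comm, Complex.I_mul_I]; simp
    rw [star_mul, hstar1, smul_mul_smul_comm] at h1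
    have h2 := congrArg μ h1
    simpa [hμ1] using h2
  have hspos : 0 ≤ s * Complex.I := by
    have := hμpos (Complex.I • (1 : Z))
    rw [hstar1, smul_mul_smul_comm] at this
    simpa [hμ1] using this
  have hsI : s = -Complex.I := by
    have h1 : (s - Complex.I) * (s + Complex.I) = 0 := by
      linear_combination hsq - Complex.I_mul_I
    rcases mul_eq_zero.1 h1 with h | h
    · exfalso
      rw [sub_eq_zero.1 h, Complex.I_mul_I] at hspos
      have := (Complex.le_def.1 hspos).1
      norm_num at this
    · exact eq_neg_of_add_eq_zero_left h
  have hstarI : ∀ z : Z, star (Complex.I • z) = -(Complex.I • star z) := by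
    intro z
    have : Complex.I • z = (Complex.I • (1 : Z)) * z := by simp
    rw [this, star_mul, hstar1, hsI]
    simp
  -- Cauchy-Schwarz
  have key : ∀ (c p q : ℂ), (∀ n : ℤ, 0 ≤ c + n * p + n * q) → p + q = 0 := by
    intro c p q h
    have him : (p + q).im = 0 := by
      have h0 := (Complex.le_def.1 (h 0)).2
      have h1 := (Complex.le_def.1 (h 1)).2
      simp at h0 h1 ⊢
      linarith
    have hre : (p + q).re = 0 := by
      by_contra hne
      obtain ⟨n, hn⟩ := exists_nat_gt ((|c.re| + 1) / |(p + q).re|)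
      have hpos : 0 < |(p + q).re| := abs_pos.2 hne
      rw [div_lt_iff₀ hpos] at hn
      have h1 := (Complex.le_def.1 (h n)).1
      have h2 := (Complex.le_def.1 (h (-n))).1
      simp at h1 h2 hn
      have h3 := le_abs_self c.re
      rcases abs_cases (p.re + q.re) with ⟨h4, _⟩ | ⟨h4, _⟩ <;> rw [h4] at hn <;> nlinarith
    exact Complex.ext hre him
  have hCS : ∀ z : Z, μ (star z * z) = 0 → ∀ w : Z, μ (w * z) = 0 := by
    intro z hz w
    have gen : ∀ y : Z, μ (star y * y) = 0 → μ (w * y) + μ (star y * star w) = 0 := by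
      intro y hy
      apply key (μ (w * star w))
      intro n
      have := hμpos (star w + n • y)
      have e : star (star w + n • y) * (star w + n • y)
          = w * star w + n • (w * y) + n • (star y * star w) + (n * n) • (star y * y) := by
        rw [star_add, star_star, star_zsmul]
        simp only [add_mul, mul_add, smul_mul_assoc, mul_smul_comm, smul_add, mul_smul]
        abel
      rw [e] at this
      rw [map_add, map_add, map_add, map_zsmul, map_zsmul, map_zsmul, hy, smul_zero, add_zero,
        zsmul_eq_mul, zsmul_eq_mul] at this
      exact this
    have g1 := gen z hz
    have g2 := gen (Complex.I • z) (by rw [hstarI]; simp [hz])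
    rw [hstarI] at g2
    simp only [mul_smul_comm, neg_mul, smul_mul_assoc, map_neg, map_smul, smul_eq_mul] at g2
    have g3 : Complex.I * (μ (w * z) - μ (star z * star w)) = 0 := by linear_combination g2
    have g4 := (mul_eq_zero.1 g3).resolve_left Complex.I_ne_zero
    linear_combination (g1 + g4) / 2
  intro z hz0
  refine lt_of_le_of_ne (hμpos z) fun hzz => hz0 ?_
  have hN := hCS z hzz.symm
  -- slice map
  let E : A ⊗[ℂ] Z →ₗ[ℂ] A := (TensorProduct.rid ℂ A).toLinearMap ∘ₗ
    TensorProduct.map (LinearMap.id (M := A)) μ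
  have hE : ∀ a x, E (a ⊗ₜ[ℂ] x) = μ x • a := by
    intro a x; simp [E]
  have hEα : ∀ x, E (αZ x) = algebraMap ℂ A (μ x) := hμinv
  have hEmul : ∀ (a : A) (u : A ⊗[ℂ] Z), E ((a ⊗ₜ[ℂ] (1 : Z)) * u) = a * E u := by
    intro a u
    induction u with
    | zero => simp
    | tmul b x => simp [hE]
    | add u v hu hv => rw [mul_add, map_add, map_add, mul_add, hu, hv]
  let L : A ⊗[ℂ] (A ⊗[ℂ] Z) →ₗ[ℂ] A ⊗[ℂ] Z :=
    TensorProduct.lift ((LinearMap.mul ℂ (A ⊗[ℂ] Z)) ∘ₗ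
      ((TensorProduct.mk ℂ A Z).flip 1) ∘ₗ (HopfAlgebra.antipode ℂ (A := A)))
  have hL : ∀ a u, L (a ⊗ₜ[ℂ] u) = (HopfAlgebra.antipode ℂ a ⊗ₜ[ℂ] (1 : Z)) * u := by
    intro a u; simp [L]
  have hL1 : ∀ y : A ⊗[ℂ] Z, L (TensorProduct.assoc ℂ A A Z
      (TensorProduct.map (Coalgebra.comul (R := ℂ) (A := A)) (LinearMap.id (M := Z)) y)) =
      (1 : A) ⊗ₜ[ℂ] (TensorProduct.lid ℂ Z
        (TensorProduct.map (Coalgebra.counit (R := ℂ) (A := A)) (LinearMap.id (M := Z)) y)) := by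
    intro y
    induction y with
    | zero => simp
    | add u v hu hv => simp only [map_add, hu, hv, TensorProduct.tmul_add]
    | tmul a x =>
      have h1 : ∀ t : A ⊗[ℂ] A, L (TensorProduct.assoc ℂ A A Z (t ⊗ₜ[ℂ] x)) =
          (LinearMap.mul' ℂ A ((HopfAlgebra.antipode ℂ (A := A)).rTensor A t)) ⊗ₜ[ℂ] x := by
        intro t
        induction t with
        | zero => simp
        | add u v hu hv => simp only [map_add, TensorProduct.add_tmul, hu, hv]
        | tmul b c => simp [hL]
      rw [TensorProduct.map_tmul, LinearMap.id_apply, h1,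
        HopfAlgebra.mul_antipode_rTensor_comul_apply]
      simp [Algebra.algebraMap_eq_smul_one, TensorProduct.smul_tmul]
  have hL2 : ∀ w : Z, L (TensorProduct.map (LinearMap.id (M := A)) αZ.toLinearMap (αZ w)) =
      (1 : A) ⊗ₜ[ℂ] w := by
    intro w
    have h1 := LinearMap.congr_fun hcoassoc w
    have h2 := LinearMap.congr_fun hcounit w
    simp only [LinearMap.comp_apply, LinearEquiv.coe_coe, AlgHom.toLinearMap_apply,
      LinearMap.id_apply] at h1 h2
    rw [← h1, hL1, h2]
  have hT : ∀ w : Z, E (((1 : A) ⊗ₜ[ℂ] w) * αZ z) = 0 := by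
    intro w
    rw [← hL2]
    generalize αZ w = y
    induction y with
    | zero => simp
    | add u v hu hv => simp only [map_add, add_mul, hu, hv, add_zero]
    | tmul a x =>
      rw [TensorProduct.map_tmul, hL, mul_assoc, hEmul, LinearMap.id_apply,
        AlgHom.toLinearMap_apply, ← map_mul, hEα, hN]
      simp
  -- expand in a basis
  let b := Module.Basis.ofVectorSpace ℂ A
  obtain ⟨f, hf⟩ : ∃ f : _ →₀ Z, αZ z = f.sum fun i x => b i ⊗ₜ[ℂ] x :=
    ⟨TensorProduct.equivFinsuppOfBasisLeft b (αZ z),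
      by rw [← TensorProduct.equivFinsuppOfBasisLeft_symm_apply, LinearEquiv.symm_apply_apply]⟩
  have hfN : ∀ i w, μ (w * f i) = 0 := by
    intro i w
    have h1 := hT w
    rw [hf, Finsupp.sum, Finset.mul_sum, map_sum] at h1
    simp only [Algebra.TensorProduct.tmul_mul_tmul, one_mul, hE] at h1
    by_cases hi : i ∈ f.support
    · exact linearIndependent_iff'.1 b.linearIndependent f.support _ h1 i hi
    · simp [Finsupp.notMem_support_iff.1 hi]
  set β := ((TensorProduct.map (LinearMap.id (M := A)) (LinearMap.mul' ℂ Z)) ∘ₗ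
          (TensorProduct.assoc ℂ A Z Z).toLinearMap ∘ₗ
          (TensorProduct.map αZ.toLinearMap (LinearMap.id (M := Z)))) with hβ
  have hβt : ∀ x y : Z, β (x ⊗ₜ[ℂ] y) = αZ x * ((1 : A) ⊗ₜ[ℂ] y) := by
    intro x y
    simp only [hβ, LinearMap.comp_apply, TensorProduct.map_tmul, LinearMap.id_apply,
      AlgHom.toLinearMap_apply, LinearEquiv.coe_coe]
    generalize αZ x = u
    induction u with
    | zero => simp
    | add u v hu hv => simp only [map_add, TensorProduct.add_tmul, add_mul, hu, hv]
    | tmul a x => simp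
  have hβm : ∀ (t : Z ⊗[ℂ] Z) (y : Z), β (t * ((1 : Z) ⊗ₜ[ℂ] y)) = β t * ((1 : A) ⊗ₜ[ℂ] y) := by
    intro t y
    induction t with
    | zero => simp
    | add u v hu hv => simp only [map_add, add_mul, hu, hv]
    | tmul a x => simp [hβt, mul_assoc]
  choose t ht using fun i => hGalois.2 (b i ⊗ₜ[ℂ] (1 : Z))
  have hz1 : z ⊗ₜ[ℂ] (1 : Z) = f.sum fun i x => t i * ((1 : Z) ⊗ₜ[ℂ] x) := by
    apply hGalois.1
    rw [hβt, hf, Finsupp.sum, Finsupp.sum, map_sum, ← Algebra.TensorProduct.one_def, mul_one]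
    refine Finset.sum_congr rfl fun i _ => ?_
    rw [hβm, ht]
    simp
  let E' : Z ⊗[ℂ] Z →ₗ[ℂ] Z := (TensorProduct.rid ℂ Z).toLinearMap ∘ₗ
    TensorProduct.map (LinearMap.id (M := Z)) μ
  have hE'0 : ∀ (t : Z ⊗[ℂ] Z) (i), E' (t * ((1 : Z) ⊗ₜ[ℂ] f i)) = 0 := by
    intro t i
    induction t with
    | zero => simp
    | add u v hu hv => simp only [map_add, add_mul, hu, hv, add_zero]
    | tmul a x => simp [E', hfN]
  have h1 := congrArg E' hz1
  rw [Finsupp.sum, map_sum, Finset.sum_eq_zero (fun i _ => hE'0 _ _)] at h1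
  simpa [E', hμ1] using h1
end

section
/- Let A be a Hopf *-algebra over ℂ admitting a Haar measure J : A → ℂ that is positive and faithful (J(a*a) ≥ 0 for all a, and J(a*a) > 0 whenever a ≠ 0) [equivalently, A is a unitarizable Hopf *-algebra]. Let Z be an A-*-Galois extension endowed with a positive Haar measure. Then (i) there exists a C*-norm on Z, and (ii) for every z ∈ Z the supremum sup{p(z) : p a C*-seminorm on Z} is finite, and the map z ↦ sup{p(z) : p a C*-seminorm on Z} is itself a C*-norm on Z. -/
open TensorProduct ComplexOrder

/-- A C*-seminorm on a complex *-algebra: a seminorm `p` with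
`p(xy) ≤ p(x)p(y)` and `p(x*x) = p(x)²`. -/
def IsCstarSeminorm {Z : Type*} [Ring Z] [Algebra ℂ Z] [StarRing Z] (p : Z → ℝ) : Prop :=
  (∀ x : Z, 0 ≤ p x) ∧ (∀ (c : ℂ) (x : Z), p (c • x) = ‖c‖ * p x) ∧
  (∀ x y : Z, p (x + y) ≤ p x + p y) ∧ (∀ x y : Z, p (x * y) ≤ p x * p y) ∧
  (∀ x : Z, p (star x * x) = p x ^ 2)

/-- A C*-norm: a C*-seminorm which is a norm. -/
def IsCstarNorm {Z : Type*} [Ring Z] [Algebra ℂ Z] [StarRing Z] (p : Z → ℝ) : Prop :=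
  IsCstarSeminorm p ∧ ∀ x : Z, p x = 0 → x = 0

set_option linter.style.haveILetI false
section Compl
open UniformSpace

lemma cstar_complete_bound {B : Type*} [CStarAlgebra B] {n : ℕ} (y : Fin n → B) (c : ℂ)
    (h : ∑ i, star (y i) * y i = c • (1 : B)) (i : Fin n) : ‖y i‖ ^ 2 ≤ ‖c‖ := by
  letI := CStarAlgebra.spectralOrder B
  letI := CStarAlgebra.spectralOrderedRing B
  have h1 : star (y i) * y i ≤ ∑ i, star (y i) * y i :=
    Finset.single_le_sum (f := fun i => star (y i) * y i)
      (fun j _ => star_mul_self_nonneg (y j)) (Finset.mem_univ i)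
  have h2 := CStarAlgebra.norm_le_norm_of_nonneg_of_le (star_mul_self_nonneg (y i)) h1
  rw [h, CStarRing.norm_star_mul_self, norm_smul] at h2
  rcases subsingleton_or_nontrivial B with hB | hB
  · have : y i = 0 := Subsingleton.elim _ _
    simp [this]
  · rw [CStarRing.norm_one, mul_one] at h2
    nlinarith

variable {Z : Type*} [SeminormedRing Z] [NormedAlgebra ℂ Z] [StarRing Z] [StarModule ℂ Z]
  [NormedStarGroup Z]

lemma uc_star : UniformContinuous (star : Z → Z) :=
  (starₗᵢ ℂ : Z ≃ₗᵢ⋆[ℂ] Z).isometry.uniformContinuous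

@[reducible] noncomputable def complStar : Star (Completion Z) := ⟨Completion.map star⟩

attribute [local instance] complStar

lemma compl_cont_star : Continuous (star : Completion Z → Completion Z) :=
  Completion.continuous_map

lemma compl_star_coe (x : Z) : star (x : Completion Z) = ((star x : Z) : Completion Z) :=
  Completion.map_coe uc_star x

@[reducible] noncomputable def complStarRing : StarRing (Completion Z) where
  star_involutive := by
    have cs := compl_cont_star (Z := Z)
    intro x
    induction x using Completion.induction_on with
    | hp => exact isClosed_eq (by fun_prop) (by fun_prop)
    | ih x => simp [compl_star_coe]
  star_mul := by
    have cs := compl_cont_star (Z := Z)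
    intro x y
    induction x, y using Completion.induction_on₂ with
    | hp => exact isClosed_eq (by fun_prop) (by fun_prop)
    | ih x y =>
      rw [← Completion.coe_mul, compl_star_coe, compl_star_coe, compl_star_coe,
        ← Completion.coe_mul, star_mul]
  star_add := by
    have cs := compl_cont_star (Z := Z)
    intro x y
    induction x, y using Completion.induction_on₂ with
    | hp => exact isClosed_eq (by fun_prop) (by fun_prop)
    | ih x y =>
      rw [← Completion.coe_add, compl_star_coe, compl_star_coe, compl_star_coe,
        ← Completion.coe_add, star_add]

lemma compl_norm (h : ∀ x : Z, ‖star x * x‖ = ‖x‖ ^ 2) (x : Completion Z) :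
    ‖x‖ * ‖x‖ ≤ ‖star x * x‖ := by
  have cs := compl_cont_star (Z := Z)
  induction x using Completion.induction_on with
  | hp => exact isClosed_le (by fun_prop) (by fun_prop)
  | ih x =>
    rw [compl_star_coe, ← Completion.coe_mul, Completion.norm_coe, Completion.norm_coe, h, sq]

lemma compl_star_smul (c : ℂ) (x : Completion Z) : star (c • x) = star c • star x := by
  have cs := compl_cont_star (Z := Z)
  induction x using Completion.induction_on with
  | hp =>
    exact isClosed_eq (cs.comp (continuous_const_smul c)) ((continuous_const_smul (star c)).comp cs)
  | ih x => rw [← Completion.coe_smul, compl_star_coe, compl_star_coe, ← Completion.coe_smul,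
      star_smul]

@[reducible] noncomputable def complCStar (h : ∀ x : Z, ‖star x * x‖ = ‖x‖ ^ 2) :
    CStarAlgebra (Completion Z) :=
  { (inferInstance : NormedRing (Completion Z)), complStarRing (Z := Z),
    (inferInstance : Algebra ℂ (Completion Z)) with
    complete := (inferInstance : CompleteSpace (Completion Z)).complete
    norm_smul_le := norm_smul_le
    norm_mul_self_le := compl_norm h
    star_smul := compl_star_smul }

lemma cstar_bound_aux (h : ∀ x : Z, ‖star x * x‖ = ‖x‖ ^ 2) {n : ℕ} (y : Fin n → Z) (c : ℂ)
    (hy : ∑ i, star (y i) * y i = c • (1 : Z)) (i : Fin n) : ‖y i‖ ^ 2 ≤ ‖c‖ := by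
  letI := complCStar h
  have := cstar_complete_bound (fun i => (y i : Completion Z)) c (by
    have := congrArg (fun z : Z => (z : Completion Z)) hy
    simp only [Completion.coe_smul, Completion.coe_one] at this
    refine Eq.trans ?_ this
    have h2 := map_sum (Completion.coeRingHom : Z →+* Completion Z)
      (fun i => star (y i) * y i) Finset.univ
    refine Eq.trans ?_ h2.symm
    refine Finset.sum_congr rfl fun j _ => ?_
    refine Eq.trans ?_ (Completion.coe_mul _ _).symm
    congr 1
    exact Completion.map_coe uc_star (y j)) i
  rw [← Completion.norm_coe (y i)]
  exact this
end Compl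

lemma cstar_bound {Z : Type*} [Ring Z] [Algebra ℂ Z] [StarRing Z]
    (hst : ∀ (c : ℂ) (z : Z), star (c • z) = star c • star z)
    (p : Z → ℝ) (hp : IsCstarSeminorm p) {n : ℕ} (y : Fin n → Z) (c : ℂ)
    (hy : ∑ i, star (y i) * y i = c • (1 : Z)) (i : Fin n) : p (y i) ^ 2 ≤ ‖c‖ := by
  obtain ⟨h0, hsm, hadd, hmul, hc⟩ := hp
  have hneg : ∀ x, p (-x) = p x := fun x => by simpa using hsm (-1) x
  have hz : p 0 = 0 := by simpa using hsm 0 0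
  letI sr : SeminormedRing Z :=
    { (inferInstance : Ring Z) with
      norm := p
      dist := fun x y => p (-x + y)
      dist_self := fun x => by simpa using hz
      dist_comm := fun x y => by rw [← hneg]; congr 1; abel
      dist_triangle := fun x y z => by
        have := hadd (-x + y) (-y + z)
        rwa [show -x + y + (-y + z) = -x + z by abel] at this
      dist_eq := fun x y => rfl
      norm_mul_le := hmul }
  letI : NormedAlgebra ℂ Z := { (inferInstance : Algebra ℂ Z) with norm_smul_le := fun c x => (hsm c x).le }
  haveI : StarModule ℂ Z := ⟨hst⟩
  have hle : ∀ x, p x ≤ p (star x) := by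
    intro x
    have h1 := hc x
    have h2 := hmul (star x) x
    rcases (h0 x).eq_or_lt with h | h
    · rw [← h]; exact h0 _
    · nlinarith
  haveI : NormedStarGroup Z := ⟨fun x => by
    have := hle (star x); rw [star_star] at this; exact this⟩
  exact cstar_bound_aux (Z := Z) hc y c hy i

section Herm
variable {B : Type*} [Ring B] [Algebra ℂ B] [StarRing B]

lemma pos_herm (hst : ∀ (c : ℂ) (z : B), star (c • z) = star c • star z)
    (φ : B →ₗ[ℂ] ℂ) (hpos : ∀ z, 0 ≤ φ (star z * z)) (z : B) :
    φ (star z) = star (φ z) := by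
  have h1 := (hpos (1 + z)).2
  have h2 := (hpos (1 + Complex.I • z)).2
  have h3 := (hpos z).2
  have h4 := (hpos 1).2
  simp only [star_add, hst, star_one, add_mul, mul_add, one_mul, mul_one, map_add, map_smul,
    smul_mul_assoc, mul_smul_comm, smul_eq_mul, Complex.zero_im, Complex.add_im, Complex.mul_im,
    Complex.star_def, Complex.conj_I, Complex.neg_im, Complex.neg_re, Complex.I_re,
    Complex.I_im, Complex.mul_re] at h1 h2 h3 h4
  apply Complex.ext <;> simp <;> linarith

@[reducible] noncomputable def posCore
    (hst : ∀ (c : ℂ) (z : B), star (c • z) = star c • star z)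
    (φ : B →ₗ[ℂ] ℂ) (hpos : ∀ z, 0 ≤ φ (star z * z)) (hf : ∀ z, φ (star z * z) = 0 → z = 0) :
    InnerProductSpace.Core ℂ B where
  inner a b := φ (star a * b)
  conj_inner_symm a b := by
    have := pos_herm hst φ hpos (star b * a)
    rw [star_mul, star_star] at this
    exact this.symm
  re_inner_nonneg a := (hpos a).1
  add_left a b c := by rw [star_add, add_mul, map_add]
  smul_left a b c := by rw [hst, smul_mul_assoc, map_smul]; rfl
  definite a h := hf a h

lemma gns_norm (hst : ∀ (c : ℂ) (z : B), star (c • z) = star c • star z)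
    (φ : B →ₗ[ℂ] ℂ) (hpos : ∀ z, 0 ≤ φ (star z * z)) (hf : ∀ z, φ (star z * z) = 0 → z = 0)
    (hspan : ∀ x : B, ∃ (n : ℕ) (y : Fin n → B) (t : Fin n → ℂ) (c : ℂ),
      x = ∑ i, t i • y i ∧ ∑ i, star (y i) * y i = c • (1 : B)) :
    ∃ N : B → ℝ, IsCstarNorm N := by
  letI core := posCore hst φ hpos hf
  letI : NormedAddCommGroup B := core.toNormedAddCommGroup
  letI : InnerProductSpace ℂ B := InnerProductSpace.ofCore core.toCore
  have hin : ∀ a b : B, inner ℂ a b = φ (star a * b) := fun a b => rfl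
  have hnsq : ∀ a : B, ‖a‖ ^ 2 = (φ (star a * a)).re := fun a => by
    rw [← hin, ← inner_self_eq_norm_sq (𝕜 := ℂ)]; rfl
  have hb : ∀ x : B, ∃ C : ℝ, ∀ y, ‖x * y‖ ≤ C * ‖y‖ := by
    intro x
    obtain ⟨n, y, t, c, hx, hc⟩ := hspan x
    have key : ∀ i w, ‖y i * w‖ ≤ Real.sqrt ‖c‖ * ‖w‖ := by
      intro i w
      have h1 : ∑ j, ‖y j * w‖ ^ 2 = c.re * ‖w‖ ^ 2 := by
        have e : star w * (∑ i, star (y i) * y i) * w = c • (star w * w) := by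
          rw [hc]; simp
        have him : (φ (star w * w)).im = 0 := ((hpos w).2).symm
        have := congrArg (fun z => (φ z).re) e
        simp only [Finset.mul_sum, Finset.sum_mul, map_sum, map_smul, smul_eq_mul,
          Complex.re_sum, Complex.mul_re, him, mul_zero, sub_zero] at this
        rw [hnsq w, ← this]
        refine Finset.sum_congr rfl fun j _ => ?_
        rw [hnsq, star_mul]; simp only [mul_assoc]
      have h2 : ‖y i * w‖ ^ 2 ≤ ∑ j, ‖y j * w‖ ^ 2 :=
        Finset.single_le_sum (f := fun j => ‖y j * w‖ ^ 2) (fun j _ => by positivity)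
          (Finset.mem_univ i)
      have h3 : c.re ≤ ‖c‖ := Complex.re_le_norm c
      refine abs_le_of_sq_le_sq' ?_ (by positivity) |>.2
      rw [mul_pow, Real.sq_sqrt (norm_nonneg _)]
      nlinarith [sq_nonneg ‖w‖]
    refine ⟨∑ i, ‖t i‖ * Real.sqrt ‖c‖, fun w => ?_⟩
    rw [hx, Finset.sum_mul, Finset.sum_mul]
    refine (norm_sum_le _ _).trans (Finset.sum_le_sum fun i _ => ?_)
    rw [smul_mul_assoc, norm_smul, mul_assoc]
    exact mul_le_mul_of_nonneg_left (key i w) (norm_nonneg _)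
  choose C hC using hb
  let L : B → (B →L[ℂ] B) := fun x => (LinearMap.mulLeft ℂ x).mkContinuous (C x) (hC x)
  have hL : ∀ x y, L x y = x * y := fun x y => rfl
  have hsq : ∀ x, ‖L x‖ ^ 2 ≤ ‖L (star x * x)‖ := by
    intro x
    have : ‖L x‖ ≤ Real.sqrt ‖L (star x * x)‖ := by
      refine ContinuousLinearMap.opNorm_le_bound _ (Real.sqrt_nonneg _) fun y => ?_
      refine abs_le_of_sq_le_sq' ?_ (by positivity) |>.2
      rw [mul_pow, Real.sq_sqrt (norm_nonneg _), hL, hnsq]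
      have h1 : φ (star (x * y) * (x * y)) = inner ℂ y (L (star x * x) y) := by
        rw [hin, hL, star_mul]; simp only [mul_assoc]
      rw [h1]
      refine (Complex.re_le_norm _).trans ((norm_inner_le_norm _ _).trans ?_)
      have := (L (star x * x)).le_opNorm y
      nlinarith [norm_nonneg y]
    calc _ ≤ (Real.sqrt ‖L (star x * x)‖) ^ 2 := by gcongr
      _ = _ := Real.sq_sqrt (norm_nonneg _)
  have hmul : ∀ x y, ‖L (x * y)‖ ≤ ‖L x‖ * ‖L y‖ := by
    intro x y
    have : L (x * y) = (L x).comp (L y) := by ext w; simp [hL, mul_assoc]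
    rw [this]; exact ContinuousLinearMap.opNorm_comp_le _ _
  have hle : ∀ x, ‖L x‖ ≤ ‖L (star x)‖ := by
    intro x
    have h1 := hsq x
    have h2 := hmul (star x) x
    rcases (norm_nonneg (L x)).eq_or_lt with h | h
    · rw [← h]; exact norm_nonneg _
    · nlinarith
  refine ⟨fun x => ‖L x‖, ⟨fun x => norm_nonneg _, fun c x => ?_, fun x y => ?_, hmul, fun x => ?_⟩,
    fun x hx => ?_⟩
  · have : L (c • x) = c • L x := by ext w; simp [hL]
    simp only [this, norm_smul]
  · have : L (x + y) = L x + L y := by ext w; simp [hL, add_mul]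
    simp only [this]; exact norm_add_le _ _
  · refine le_antisymm ?_ (hsq x)
    refine (hmul _ _).trans ?_
    have := hle (star x)
    rw [star_star] at this
    nlinarith [norm_nonneg (L x)]
  · have h0 : L x = 0 := norm_eq_zero.mp hx
    have := congrArg (fun f : B →L[ℂ] B => f 1) h0
    simpa [hL] using this

lemma conclusion (hst : ∀ (c : ℂ) (z : B), star (c • z) = star c • star z)
    (hN : ∃ N : B → ℝ, IsCstarNorm N)
    (hspan : ∀ x : B, ∃ (n : ℕ) (y : Fin n → B) (t : Fin n → ℂ) (c : ℂ),
      x = ∑ i, t i • y i ∧ ∑ i, star (y i) * y i = c • (1 : B)) :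
    (∃ N : B → ℝ, IsCstarNorm N) ∧
    (∀ z : B, BddAbove ((fun p : B → ℝ => p z) '' {p : B → ℝ | IsCstarSeminorm p})) ∧
    IsCstarNorm (fun z : B => sSup ((fun p : B → ℝ => p z) '' {p : B → ℝ | IsCstarSeminorm p})) := by
  have hbdd : ∀ z : B, BddAbove ((fun p : B → ℝ => p z) '' {p : B → ℝ | IsCstarSeminorm p}) := by
    intro x
    obtain ⟨n, y, t, c, hx, hc⟩ := hspan x
    refine ⟨∑ i, ‖t i‖ * Real.sqrt ‖c‖, ?_⟩
    rintro _ ⟨p, hp, rfl⟩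
    have hp' := hp
    obtain ⟨h0, hsm, hadd, hmul, hcs⟩ := hp
    have hz : p 0 = 0 := by simpa using hsm 0 0
    simp only
    rw [hx]
    refine (Finset.le_sum_of_subadditive p hz.le hadd _ _).trans (Finset.sum_le_sum fun i _ => ?_)
    rw [hsm]
    refine mul_le_mul_of_nonneg_left ?_ (norm_nonneg _)
    exact Real.le_sqrt_of_sq_le (cstar_bound hst p hp' y c hc i)
  refine ⟨hN, hbdd, ?_⟩
  obtain ⟨N, hN⟩ := hN
  set s : B → ℝ := fun z : B => sSup ((fun p : B → ℝ => p z) '' {p : B → ℝ | IsCstarSeminorm p})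
    with hs
  have hle : ∀ p, IsCstarSeminorm p → ∀ x, p x ≤ s x := fun p hp x =>
    le_csSup (hbdd x) ⟨p, hp, rfl⟩
  have hsup : ∀ x C, (∀ p, IsCstarSeminorm p → p x ≤ C) → s x ≤ C := by
    intro x C h
    refine csSup_le ⟨_, N, hN.1, rfl⟩ ?_
    rintro _ ⟨p, hp, rfl⟩
    exact h p hp
  have hs0 : ∀ x, 0 ≤ s x := fun x => (hN.1.1 x).trans (hle N hN.1 x)
  have hsm : ∀ (c : ℂ) x, s (c • x) ≤ ‖c‖ * s x := fun c x => hsup _ _ fun p hp => by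
    rw [hp.2.1]; exact mul_le_mul_of_nonneg_left (hle p hp x) (norm_nonneg _)
  refine ⟨⟨hs0, fun c x => le_antisymm (hsm c x) ?_, fun x y => ?_, fun x y => ?_, fun x => ?_⟩,
    fun x hx => ?_⟩
  · rcases eq_or_ne c 0 with rfl | hc
    · simpa using hs0 _
    · have h1 := hsm c⁻¹ (c • x)
      rw [smul_smul, inv_mul_cancel₀ hc, one_smul, norm_inv] at h1
      have : 0 < ‖c‖ := norm_pos_iff.mpr hc
      calc ‖c‖ * s x ≤ ‖c‖ * (‖c‖⁻¹ * s (c • x)) := by gcongr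
        _ = _ := by field_simp
  · exact hsup _ _ fun p hp => (hp.2.2.1 x y).trans (add_le_add (hle p hp x) (hle p hp y))
  · exact hsup _ _ fun p hp => (hp.2.2.2.1 x y).trans
      (mul_le_mul (hle p hp x) (hle p hp y) (hp.1 _) (hs0 _))
  · refine le_antisymm (hsup _ _ fun p hp => ?_) ?_
    · rw [hp.2.2.2.2]; exact pow_le_pow_left₀ (hp.1 x) (hle p hp x) 2
    · have : s x ≤ Real.sqrt (s (star x * x)) := hsup _ _ fun p hp =>
        Real.le_sqrt_of_sq_le (by rw [← hp.2.2.2.2]; exact hle p hp _)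
      calc s x ^ 2 ≤ (Real.sqrt (s (star x * x))) ^ 2 := by gcongr; exact hs0 x
        _ = _ := Real.sq_sqrt (hs0 _)
  · exact hN.2 x (le_antisymm (hx ▸ hle N hN.1 x) (hN.1.1 x))

end Herm

section StarLin

lemma star_conj_of_tensor {A : Type*} [Ring A] [Algebra ℂ A] [StarRing A]
    (SA : A ⊗[ℂ] A → A ⊗[ℂ] A)
    (hSAtmul : ∀ a b : A, SA (a ⊗ₜ[ℂ] b) = star a ⊗ₜ[ℂ] star b)
    (J : A →ₗ[ℂ] ℂ) (hJ1 : J 1 = 1) (hJpos : ∀ a : A, 0 ≤ J (star a * a))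
    (c : ℂ) (a : A) : star (c • a) = star c • star a := by
  have h1 : ∀ c : ℂ, star (c • (1 : A)) = J (star (c • (1 : A))) • (1 : A) := by
    intro c
    have h : star (c • (1 : A)) ⊗ₜ[ℂ] (1 : A) = (1 : A) ⊗ₜ[ℂ] star (c • (1 : A)) := by
      have e : SA ((c • (1 : A)) ⊗ₜ[ℂ] (1 : A)) = SA ((1 : A) ⊗ₜ[ℂ] (c • (1 : A))) := by
        rw [TensorProduct.smul_tmul]
      rwa [hSAtmul, hSAtmul, star_one] at e
    have := congrArg (fun t => TensorProduct.lid ℂ A (TensorProduct.map J LinearMap.id t)) h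
    simp only [TensorProduct.map_tmul, TensorProduct.lid_tmul, LinearMap.id_apply, hJ1,
      one_smul] at this
    exact this.symm
  have hsm : ∀ (c : ℂ) (a : A), star (c • a) = J (star (c • (1 : A))) • star a := by
    intro c a
    rw [show c • a = (c • (1 : A)) * a by simp, star_mul, h1 c]
    simp [hJ1]
  let φ : ℂ →+* ℂ :=
    { toFun := fun c => J (star (c • (1 : A)))
      map_one' := by simp [hJ1]
      map_zero' := by simp
      map_add' := fun c d => by rw [add_smul, star_add, map_add]
      map_mul' := fun c d => by
        rw [mul_smul, hsm, map_smul, smul_eq_mul] }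
  have hφ : ∀ c, φ c = J (star (c • (1 : A))) := fun c => rfl
  have hpos : ∀ c : ℂ, 0 ≤ φ c * c := by
    intro c
    have := hJpos (c • 1)
    rw [h1 c, ← hφ] at this
    simpa [hJ1, mul_comm] using this
  have him : ∀ r : ℝ, (φ r).im = 0 := by
    intro r
    rcases eq_or_ne r 0 with rfl | hr
    · simp
    · have := (hpos r).2
      simp at this
      tauto
  let ψ : ℝ →+* ℝ :=
    { toFun := fun r => (φ r).re
      map_one' := by simp
      map_zero' := by simp
      map_add' := fun c d => by simp
      map_mul' := fun c d => by simp [him] }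
  have hψ : ∀ r : ℝ, (φ r).re = r := fun r => by
    have : ψ = RingHom.id ℝ := Subsingleton.elim _ _
    exact congrArg (fun f : ℝ →+* ℝ => f r) this
  have hreal : ∀ r : ℝ, φ r = r := fun r => Complex.ext (by simp [hψ]) (by simp [him])
  have hI : φ Complex.I = -Complex.I := by
    have h2 : φ Complex.I * φ Complex.I = -1 := by
      rw [← map_mul, Complex.I_mul_I, map_neg, map_one]
    have h3 : (φ Complex.I - Complex.I) * (φ Complex.I + Complex.I) = 0 := by
      linear_combination h2 - Complex.I_mul_I
    rcases mul_eq_zero.mp h3 with h | h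
    · have h4 := (hpos Complex.I).1
      rw [sub_eq_zero.mp h] at h4
      simp at h4
      norm_num at h4
    · exact eq_neg_of_add_eq_zero_left h
  rw [hsm, ← hφ]
  congr 1
  conv_lhs => rw [← Complex.re_add_im c]
  rw [map_add, map_mul, hreal, hreal, hI]
  apply Complex.ext <;> simp

lemma star_conj_of_tensor' {A Z : Type*} [Ring A] [Algebra ℂ A] [StarRing A]
    [Ring Z] [Algebra ℂ Z] [StarRing Z]
    (hA : ∀ (c : ℂ) (a : A), star (c • a) = star c • star a)
    (SZ : A ⊗[ℂ] Z → A ⊗[ℂ] Z)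
    (hSZtmul : ∀ (a : A) (z : Z), SZ (a ⊗ₜ[ℂ] z) = star a ⊗ₜ[ℂ] star z)
    (J : A →ₗ[ℂ] ℂ) (hJ1 : J 1 = 1)
    (c : ℂ) (z : Z) : star (c • z) = star c • star z := by
  have e : SZ ((1 : A) ⊗ₜ[ℂ] (c • z)) = SZ ((c • (1 : A)) ⊗ₜ[ℂ] z) := by
    rw [TensorProduct.smul_tmul]
  rw [hSZtmul, hSZtmul, star_one, hA, star_one] at e
  have := congrArg (fun t => TensorProduct.lid ℂ Z (TensorProduct.map J LinearMap.id t)) e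
  simpa [hJ1] using this

lemma pos_null {B : Type*} [Ring B] [Algebra ℂ B] [StarRing B]
    (hst : ∀ (c : ℂ) (z : B), star (c • z) = star c • star z)
    (φ : B →ₗ[ℂ] ℂ) (hpos : ∀ z, 0 ≤ φ (star z * z)) (x : B) (hx : φ (star x * x) = 0)
    (y : B) : φ (y * x) = 0 := by
  have hh : φ (star x * star y) = star (φ (y * x)) := by
    rw [← pos_herm hst φ hpos, star_mul]
  have key : ∀ r : ℝ, 0 ≤ (φ (y * star y)).re - 2 * r * Complex.normSq (φ (y * x)) := by
    intro r
    have := (hpos (star y + (-(r : ℂ) * star (φ (y * x))) • x)).1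
    simp only [star_add, hst, star_star, add_mul, mul_add, smul_mul_assoc, mul_smul_comm,
      map_add, map_smul, hx, hh, smul_eq_mul] at this
    simp [Complex.normSq_apply] at this ⊢
    linarith
  by_contra hne
  have hp : 0 < Complex.normSq (φ (y * x)) := Complex.normSq_pos.mpr hne
  have := key (((φ (y * star y)).re + 1) / (2 * Complex.normSq (φ (y * x))))
  have e : 2 * (((φ (y * star y)).re + 1) / (2 * Complex.normSq (φ (y * x)))) *
    Complex.normSq (φ (y * x)) = (φ (y * star y)).re + 1 := by field_simp
  rw [e] at this
  linarith

lemma exists_onb {B : Type*} [Ring B] [Algebra ℂ B] [StarRing B]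
    (hst : ∀ (c : ℂ) (z : B), star (c • z) = star c • star z)
    (φ : B →ₗ[ℂ] ℂ) (hpos : ∀ z, 0 ≤ φ (star z * z)) (hf : ∀ z, φ (star z * z) = 0 → z = 0)
    (V : Submodule ℂ B) [FiniteDimensional ℂ V] :
    ∃ (n : ℕ) (z : Fin n → B), (∀ i, z i ∈ V) ∧
      (∀ i j, φ (star (z i) * z j) = if i = j then 1 else 0) ∧
      ∀ v ∈ V, v = ∑ i, φ (star (z i) * v) • z i := by
  letI core := posCore hst φ hpos hf
  letI : NormedAddCommGroup B := core.toNormedAddCommGroup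
  letI : InnerProductSpace ℂ B := InnerProductSpace.ofCore core.toCore
  have hin : ∀ a b : B, inner ℂ a b = φ (star a * b) := fun a b => rfl
  let b := stdOrthonormalBasis ℂ V
  refine ⟨_, fun i => (b i : B), fun i => (b i).2, fun i j => ?_, fun v hv => ?_⟩
  · rw [← hin]
    exact orthonormal_iff_ite.mp b.orthonormal i j
  · have := congrArg (Subtype.val) (b.sum_repr' ⟨v, hv⟩)
    rw [Submodule.coe_sum] at this
    exact this.symm

lemma exists_on_repr {B M : Type*} [Ring B] [Algebra ℂ B] [StarRing B]
    [AddCommGroup M] [Module ℂ M]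
    (hst : ∀ (c : ℂ) (z : B), star (c • z) = star c • star z)
    (φ : B →ₗ[ℂ] ℂ) (hpos : ∀ z, 0 ≤ φ (star z * z)) (hf : ∀ z, φ (star z * z) = 0 → z = 0)
    (w : B ⊗[ℂ] M) :
    ∃ (n : ℕ) (a : Fin n → B) (x : Fin n → M),
      (∀ i j, φ (star (a i) * a j) = if i = j then 1 else 0) ∧ w = ∑ i, a i ⊗ₜ[ℂ] x i := by
  classical
  obtain ⟨S, hS⟩ := TensorProduct.exists_finset w
  let V : Submodule ℂ B := Submodule.span ℂ (S.image Prod.fst : Set B)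
  obtain ⟨n, a, -, hon, hV⟩ := exists_onb hst φ hpos hf V
  refine ⟨n, a, fun i => ∑ s ∈ S, φ (star (a i) * s.1) • s.2, hon, ?_⟩
  rw [hS]
  simp only [TensorProduct.tmul_sum]
  rw [Finset.sum_comm]
  refine Finset.sum_congr rfl fun s hs => ?_
  have := hV s.1 (Submodule.subset_span (by
    simp only [Finset.coe_image]; exact ⟨s, hs, rfl⟩))
  conv_lhs => rw [this]
  rw [TensorProduct.sum_tmul]
  simp only [TensorProduct.smul_tmul]

end StarLin

section Gal
variable {A Z : Type*} [Ring A] [HopfAlgebra ℂ A] [Ring Z] [Algebra ℂ Z]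

/-- slice map -/
noncomputable def slice (A : Type*) {M : Type*} [Ring A] [Algebra ℂ A] [AddCommGroup M] [Module ℂ M]
    (f : M →ₗ[ℂ] ℂ) : A ⊗[ℂ] M →ₗ[ℂ] A :=
  (TensorProduct.rid ℂ A).toLinearMap ∘ₗ TensorProduct.map LinearMap.id f

@[simp] lemma slice_tmul {M : Type*} [AddCommGroup M] [Module ℂ M] (f : M →ₗ[ℂ] ℂ) (a : A) (m : M) :
    slice A f (a ⊗ₜ[ℂ] m) = f m • a := by simp [slice]

lemma can_tmul (αZ : Z →ₐ[ℂ] A ⊗[ℂ] Z) (p q : Z) :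
    ((TensorProduct.map LinearMap.id (LinearMap.mul' ℂ Z)) ∘ₗ
          (TensorProduct.assoc ℂ A Z Z).toLinearMap ∘ₗ
          (TensorProduct.map αZ.toLinearMap LinearMap.id)) (p ⊗ₜ[ℂ] q) =
      αZ p * ((1 : A) ⊗ₜ[ℂ] q) := by
  simp only [LinearMap.comp_apply, TensorProduct.map_tmul, LinearMap.id_apply,
    AlgHom.toLinearMap_apply]
  induction αZ p using TensorProduct.induction_on with
  | zero => simp
  | tmul a z => simp
  | add s t hs ht => 
    rw [TensorProduct.add_tmul, map_add, map_add, hs, ht, add_mul]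

lemma can_mul (αZ : Z →ₐ[ℂ] A ⊗[ℂ] Z) (G : Z ⊗[ℂ] Z →ₗ[ℂ] A ⊗[ℂ] Z)
    (hG : ∀ p q, G (p ⊗ₜ[ℂ] q) = αZ p * ((1 : A) ⊗ₜ[ℂ] q)) (k : Z ⊗[ℂ] Z) (y : Z) :
    G (k * ((1 : Z) ⊗ₜ[ℂ] y)) = G k * ((1 : A) ⊗ₜ[ℂ] y) := by
  induction k using TensorProduct.induction_on with
  | zero => simp
  | tmul p q => simp [hG, mul_assoc]
  | add s t hs ht => rw [add_mul, map_add, hs, ht, map_add, add_mul]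

lemma coinv_scalar (αZ : Z →ₐ[ℂ] A ⊗[ℂ] Z) (G : Z ⊗[ℂ] Z →ₗ[ℂ] A ⊗[ℂ] Z)
    (hG : ∀ p q, G (p ⊗ₜ[ℂ] q) = αZ p * ((1 : A) ⊗ₜ[ℂ] q)) (hinj : Function.Injective G)
    (μ : Z →ₗ[ℂ] ℂ) (hμ1 : μ 1 = 1) (w : Z) (hw : αZ w = 1 ⊗ₜ[ℂ] w) : w = μ w • (1 : Z) := by
  have : w ⊗ₜ[ℂ] (1 : Z) = (1 : Z) ⊗ₜ[ℂ] w := by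
    apply hinj
    rw [hG, hG, hw, map_one, one_mul]
    simp
  have := congrArg (fun t => TensorProduct.rid ℂ Z (TensorProduct.map LinearMap.id μ t)) this
  simpa [hμ1] using this

lemma alpha_star_mul [StarRing A] [StarRing Z] (αZ : Z →ₐ[ℂ] A ⊗[ℂ] Z)
    (SZ : A ⊗[ℂ] Z → A ⊗[ℂ] Z)
    (hSZadd : ∀ u v, SZ (u + v) = SZ u + SZ v)
    (hSZtmul : ∀ (a : A) (z : Z), SZ (a ⊗ₜ[ℂ] z) = star a ⊗ₜ[ℂ] star z)
    (hαZstar : ∀ z : Z, αZ (star z) = SZ (αZ z)) {n : ℕ} (a : Fin n → A) (x : Fin n → Z) (z : Z)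
    (h : αZ z = ∑ i, a i ⊗ₜ[ℂ] x i) : αZ (star z) = ∑ i, star (a i) ⊗ₜ[ℂ] star (x i) := by
  rw [hαZstar, h]
  have := map_sum (AddMonoidHom.mk' SZ hSZadd) (fun i => a i ⊗ₜ[ℂ] x i) Finset.univ
  simp only [AddMonoidHom.mk'_apply, hSZtmul] at this
  exact this

lemma mu_faithful [StarRing A] [StarRing Z]
    (hA : ∀ (c : ℂ) (a : A), star (c • a) = star c • star a)
    (hZ : ∀ (c : ℂ) (a : Z), star (c • a) = star c • star a)
    (J : A →ₗ[ℂ] ℂ) (hpos : ∀ z, 0 ≤ J (star z * z))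
    (hf : ∀ z, J (star z * z) = 0 → z = 0)
    (αZ : Z →ₐ[ℂ] A ⊗[ℂ] Z) (G : Z ⊗[ℂ] Z →ₗ[ℂ] A ⊗[ℂ] Z)
    (hG : ∀ p q, G (p ⊗ₜ[ℂ] q) = αZ p * ((1 : A) ⊗ₜ[ℂ] q)) (hbij : Function.Bijective G)
    (SZ : A ⊗[ℂ] Z → A ⊗[ℂ] Z)
    (hSZadd : ∀ u v, SZ (u + v) = SZ u + SZ v)
    (hSZtmul : ∀ (a : A) (z : Z), SZ (a ⊗ₜ[ℂ] z) = star a ⊗ₜ[ℂ] star z)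
    (hαZstar : ∀ z : Z, αZ (star z) = SZ (αZ z))
    (μ : Z →ₗ[ℂ] ℂ) (hμ1 : μ 1 = 1)
    (hμinv : ∀ z : Z, slice A μ (αZ z) = algebraMap ℂ A (μ z))
    (hμpos : ∀ z : Z, 0 ≤ μ (star z * z)) (z : Z) (hz : μ (star z * z) = 0) : z = 0 := by
  obtain ⟨n, a, x, hon, hα⟩ := exists_on_repr hA J hpos hf (αZ z)
  have hα' := alpha_star_mul αZ SZ hSZadd hSZtmul hαZstar a x z hα
  have h1 := hμinv (star z * z)
  rw [map_mul, hα, hα', hz, map_zero, Finset.sum_mul_sum] at h1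
  simp only [Algebra.TensorProduct.tmul_mul_tmul, map_sum, slice_tmul] at h1
  have h2 := congrArg J h1
  simp only [map_sum, map_smul, hon, map_zero, smul_eq_mul, mul_ite, mul_one, mul_zero,
    Finset.sum_ite_eq, Finset.mem_univ, if_true] at h2
  have h3 : ∀ i, μ (star (x i) * x i) = 0 := by
    intro i
    exact (Finset.sum_eq_zero_iff_of_nonneg (fun i _ => hμpos (x i))).mp h2 i (Finset.mem_univ i)
  choose k hk using fun i => hbij.2 (a i ⊗ₜ[ℂ] (1 : Z))
  have h4 : z ⊗ₜ[ℂ] (1 : Z) = ∑ i, k i * ((1 : Z) ⊗ₜ[ℂ] x i) := by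
    apply hbij.1
    rw [hG, hα, map_sum, ← Algebra.TensorProduct.one_def, mul_one]
    refine Finset.sum_congr rfl fun i _ => ?_
    rw [can_mul αZ G hG, hk]
    simp
  have h5 : ∀ i (t : Z ⊗[ℂ] Z), slice Z μ (t * ((1 : Z) ⊗ₜ[ℂ] x i)) = 0 := by
    intro i t
    induction t using TensorProduct.induction_on with
    | zero => simp
    | tmul p q => simp [slice, pos_null hZ μ hμpos (x i) (h3 i) q]
    | add s t hs ht => rw [add_mul, map_add, hs, ht, add_zero]
  have h6 := congrArg (slice Z μ) h4
  rw [map_sum, Finset.sum_eq_zero (fun i _ => h5 i (k i))] at h6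
  simpa [slice, hμ1] using h6

end Gal

section Uni
variable {A Z : Type*} [Ring A] [HopfAlgebra ℂ A] [Ring Z] [Algebra ℂ Z]

lemma assoc_lid (f : A →ₗ[ℂ] ℂ) (t : A ⊗[ℂ] A) (x : Z) :
    TensorProduct.lid ℂ (A ⊗[ℂ] Z) (TensorProduct.map f LinearMap.id
      (TensorProduct.assoc ℂ A A Z (t ⊗ₜ[ℂ] x))) =
    (TensorProduct.lid ℂ A (TensorProduct.map f LinearMap.id t)) ⊗ₜ[ℂ] x := by
  induction t using TensorProduct.induction_on with
  | zero => simp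
  | tmul p q => simp [TensorProduct.smul_tmul']
  | add s t hs ht => simp only [TensorProduct.add_tmul, map_add, hs, ht]

lemma assoc_slice (f : Z →ₗ[ℂ] ℂ) (t : A ⊗[ℂ] A) (x : Z) :
    TensorProduct.map LinearMap.id (slice A f)
      (TensorProduct.assoc ℂ A A Z (t ⊗ₜ[ℂ] x)) = f x • t := by
  induction t using TensorProduct.induction_on with
  | zero => simp
  | tmul p q => simp
  | add s t hs ht => simp only [TensorProduct.add_tmul, map_add, hs, ht, smul_add]

lemma unitary_rep {A : Type*} [Ring A] [HopfAlgebra ℂ A] [StarRing A]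
    (SA : A ⊗[ℂ] A → A ⊗[ℂ] A)
    (hSAadd : ∀ u v, SA (u + v) = SA u + SA v)
    (hSAtmul : ∀ a b : A, SA (a ⊗ₜ[ℂ] b) = star a ⊗ₜ[ℂ] star b)
    (hcomul_star : ∀ a : A,
      Coalgebra.comul (R := ℂ) (star a) = SA (Coalgebra.comul (R := ℂ) a))
    {m : ℕ} (u : Fin m → Fin m → A)
    (hΔ : ∀ i k, Coalgebra.comul (R := ℂ) (u i k) = ∑ j, u i j ⊗ₜ[ℂ] u j k)
    (hu : ∀ i k, ∑ j, star (u i j) * u k j = if i = k then 1 else 0) (j k : Fin m) :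
    ∑ i, u i j * star (u i k) = if j = k then 1 else 0 := by
  have hΔ' : ∀ i k, Coalgebra.comul (R := ℂ) (star (u i k)) =
      ∑ j, star (u i j) ⊗ₜ[ℂ] star (u j k) := by
    intro i k
    rw [hcomul_star, hΔ]
    have := map_sum (AddMonoidHom.mk' SA hSAadd) (fun j => u i j ⊗ₜ[ℂ] u j k) Finset.univ
    simp only [AddMonoidHom.mk'_apply, hSAtmul] at this
    exact this
  let U : Matrix (Fin m) (Fin m) A := Matrix.of fun i j => star (u i j)
  let T : Matrix (Fin m) (Fin m) A := Matrix.of fun i j => u j i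
  let S : Matrix (Fin m) (Fin m) A := Matrix.of fun i j => HopfAlgebra.antipode ℂ (star (u i j))
  let E : Matrix (Fin m) (Fin m) A :=
    Matrix.of fun i j => algebraMap ℂ A (Coalgebra.counit (R := ℂ) (star (u i j)))
  have hUT : U * T = 1 := by
    ext i k
    rw [Matrix.mul_apply, Matrix.one_apply]
    exact hu i k
  have hSU : S * U = E := by
    ext i k
    rw [Matrix.mul_apply]
    have := HopfAlgebra.mul_antipode_rTensor_comul_apply (R := ℂ) (star (u i k))
    rw [hΔ'] at this
    simpa [S, U, E] using this
  have hEU : E * U = U := by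
    ext i k
    rw [Matrix.mul_apply]
    have := Coalgebra.rTensor_counit_comul (R := ℂ) (star (u i k))
    rw [hΔ'] at this
    have := congrArg (TensorProduct.lid ℂ A) this
    simpa [U, E, Algebra.smul_def] using this
  have hE : E = 1 := by
    have : E * (U * T) = U * T := by rw [← mul_assoc, hEU]
    rwa [hUT, mul_one] at this
  have hST : S = T := left_inv_eq_right_inv (hSU.trans hE) hUT
  have hTU : T * U = 1 := by rw [← hST, hSU, hE]
  have := congrFun (congrFun hTU j) k
  rw [Matrix.mul_apply, Matrix.one_apply] at this
  exact this

lemma span_lemma [StarRing A] [StarRing Z]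
    (hA : ∀ (c : ℂ) (a : A), star (c • a) = star c • star a)
    (hZ : ∀ (c : ℂ) (a : Z), star (c • a) = star c • star a)
    (SA : A ⊗[ℂ] A → A ⊗[ℂ] A)
    (hSAadd : ∀ u v, SA (u + v) = SA u + SA v)
    (hSAtmul : ∀ a b : A, SA (a ⊗ₜ[ℂ] b) = star a ⊗ₜ[ℂ] star b)
    (hcomul_star : ∀ a : A,
      Coalgebra.comul (R := ℂ) (star a) = SA (Coalgebra.comul (R := ℂ) a))
    (J : A →ₗ[ℂ] ℂ) (hpos : ∀ z, 0 ≤ J (star z * z))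
    (hf : ∀ z, J (star z * z) = 0 → z = 0)
    (αZ : Z →ₐ[ℂ] A ⊗[ℂ] Z) (G : Z ⊗[ℂ] Z →ₗ[ℂ] A ⊗[ℂ] Z)
    (hG : ∀ p q, G (p ⊗ₜ[ℂ] q) = αZ p * ((1 : A) ⊗ₜ[ℂ] q)) (hinj : Function.Injective G)
    (hcoassoc : ∀ z, TensorProduct.assoc ℂ A A Z
          (TensorProduct.map (Coalgebra.comul (R := ℂ) (A := A)) (LinearMap.id (M := Z)) (αZ z)) =
        TensorProduct.map (LinearMap.id (M := A)) αZ.toLinearMap (αZ z))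
    (hcounit : ∀ z, TensorProduct.lid ℂ Z
          (TensorProduct.map (Coalgebra.counit (R := ℂ) (A := A)) (LinearMap.id (M := Z)) (αZ z)) =
        z)
    (SZ : A ⊗[ℂ] Z → A ⊗[ℂ] Z)
    (hSZadd : ∀ u v, SZ (u + v) = SZ u + SZ v)
    (hSZtmul : ∀ (a : A) (z : Z), SZ (a ⊗ₜ[ℂ] z) = star a ⊗ₜ[ℂ] star z)
    (hαZstar : ∀ z : Z, αZ (star z) = SZ (αZ z))
    (μ : Z →ₗ[ℂ] ℂ) (hμ1 : μ 1 = 1)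
    (hμinv : ∀ z : Z, slice A μ (αZ z) = algebraMap ℂ A (μ z))
    (hμpos : ∀ z : Z, 0 ≤ μ (star z * z)) (hμf : ∀ z, μ (star z * z) = 0 → z = 0) (x₀ : Z) :
    ∃ (n : ℕ) (y : Fin n → Z) (t : Fin n → ℂ) (c : ℂ),
      x₀ = ∑ i, t i • y i ∧ ∑ i, star (y i) * y i = c • (1 : Z) := by
  obtain ⟨n, a, x, hon, hα⟩ := exists_on_repr hA J hpos hf (αZ (star x₀))
  -- the subcomodule
  have hb : ∃ b : Fin n → Fin n → A, ∀ k, αZ (x k) = ∑ i, b k i ⊗ₜ[ℂ] x i := by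
    refine ⟨fun k i => TensorProduct.lid ℂ A (TensorProduct.map
      (J ∘ₗ LinearMap.mulLeft ℂ (star (a k))) LinearMap.id
        (Coalgebra.comul (R := ℂ) (a i))), fun k => ?_⟩
    have h := congrArg (fun t => TensorProduct.lid ℂ (A ⊗[ℂ] Z) (TensorProduct.map
      (J ∘ₗ LinearMap.mulLeft ℂ (star (a k))) LinearMap.id t)) (hcoassoc (star x₀))
    simp only [hα, map_sum, TensorProduct.map_tmul, LinearMap.id_apply, assoc_lid,
      TensorProduct.lid_tmul, LinearMap.comp_apply, LinearMap.mulLeft_apply, hon, ite_smul,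
      one_smul, zero_smul, Finset.sum_ite_eq, Finset.mem_univ, if_true,
      AlgHom.toLinearMap_apply] at h
    exact h.symm
  obtain ⟨b, hb⟩ := hb
  let V : Submodule ℂ Z := Submodule.span ℂ (Set.range x)
  have hx₀ : star x₀ ∈ V := by
    have h := hcounit (star x₀)
    rw [hα] at h
    simp only [map_sum, TensorProduct.map_tmul, TensorProduct.lid_tmul, LinearMap.id_apply] at h
    rw [← h]
    exact Submodule.sum_mem _ fun i _ => Submodule.smul_mem _ _ (Submodule.subset_span ⟨i, rfl⟩)
  haveI : FiniteDimensional ℂ V := FiniteDimensional.span_of_finite ℂ (Set.finite_range x)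
  obtain ⟨m, z, hzV, hzon, hzsum⟩ := exists_onb hZ μ hμpos hμf V
  let μl : Fin m → (Z →ₗ[ℂ] ℂ) := fun l => μ ∘ₗ LinearMap.mulLeft ℂ (star (z l))
  have hμl : ∀ l v, μl l v = μ (star (z l) * v) := fun l v => rfl
  let π : Z →ₗ[ℂ] Z := ∑ l, (μl l).smulRight (z l)
  have hπ : ∀ v, π v = ∑ l, μ (star (z l) * v) • z l := fun v => by
    simp [π, hμl]
  have hπV : ∀ v ∈ V, TensorProduct.map LinearMap.id π (αZ v) = αZ v := by
    intro v hv
    induction hv using Submodule.span_induction with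
    | mem v hv =>
      obtain ⟨k, rfl⟩ := hv
      rw [hb, map_sum]
      refine Finset.sum_congr rfl fun i _ => ?_
      rw [TensorProduct.map_tmul, hπ, ← hzsum (x i) (Submodule.subset_span ⟨i, rfl⟩)]
      rfl
    | zero => simp
    | add v w _ _ hv hw => simp only [map_add, hv, hw]
    | smul c v _ hv => simp only [map_smul, hv]
  have hπs : ∀ t : A ⊗[ℂ] Z, TensorProduct.map LinearMap.id π t =
      ∑ l, slice A (μl l) t ⊗ₜ[ℂ] z l := by
    intro t
    induction t using TensorProduct.induction_on with
    | zero => simp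
    | tmul p q => simp [hπ, TensorProduct.tmul_sum, hμl, TensorProduct.smul_tmul]
    | add s t hs ht => simp only [map_add, hs, ht, TensorProduct.add_tmul, Finset.sum_add_distrib]
  let u : Fin m → Fin m → A := fun i j => slice A (μl j) (αZ (z i))
  have hu : ∀ i, αZ (z i) = ∑ j, u i j ⊗ₜ[ℂ] z j := fun i => by
    rw [← hπs, hπV _ (hzV i)]
  clear_value u
  have hus : ∀ i, αZ (star (z i)) = ∑ j, star (u i j) ⊗ₜ[ℂ] star (z j) := fun i =>
    alpha_star_mul αZ SZ hSZadd hSZtmul hαZstar _ _ _ (hu i)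
  have hΔ : ∀ i k, Coalgebra.comul (R := ℂ) (u i k) = ∑ j, u i j ⊗ₜ[ℂ] u j k := by
    intro i k
    have h := congrArg (TensorProduct.map LinearMap.id (slice A (μl k))) (hcoassoc (z i))
    simpa only [hu i, map_sum, TensorProduct.map_tmul, LinearMap.id_apply, assoc_slice, hμl, hzon,
      AlgHom.toLinearMap_apply, hu, slice_tmul, ite_smul, one_smul, zero_smul,
      Finset.sum_ite_eq, Finset.mem_univ, if_true] using h
  have hun : ∀ i k, ∑ j, star (u i j) * u k j = if i = k then 1 else 0 := by
    intro i k
    have h := hμinv (star (z i) * z k)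
    rw [map_mul, hus, hu, Finset.sum_mul_sum, hzon] at h
    simp only [Algebra.TensorProduct.tmul_mul_tmul, map_sum, slice_tmul, hzon, ite_smul, one_smul,
      zero_smul, Finset.sum_ite_eq, Finset.mem_univ, if_true] at h
    rw [h]
    split_ifs <;> simp
  have hun' := unitary_rep SA hSAadd hSAtmul hcomul_star u hΔ hun
  have hw : αZ (∑ i, z i * star (z i)) = 1 ⊗ₜ[ℂ] (∑ i, z i * star (z i)) := by
    rw [map_sum]
    simp only [map_mul, hu, hus, Finset.sum_mul_sum, Algebra.TensorProduct.tmul_mul_tmul]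
    rw [Finset.sum_comm]
    rw [TensorProduct.tmul_sum]
    refine Finset.sum_congr rfl fun j _ => ?_
    rw [Finset.sum_comm]
    simp only [← TensorProduct.sum_tmul, hun']
    rw [Finset.sum_eq_single j]
    · simp
    · intro k _ hk
      rw [if_neg (Ne.symm hk), TensorProduct.zero_tmul]
    · simp
  refine ⟨m, fun i => star (z i), fun i => star (μ (star (z i) * star x₀)),
    μ (∑ i, z i * star (z i)), ?_, ?_⟩
  · have := congrArg star (hzsum _ hx₀)
    rw [star_star, star_sum] at this
    simpa only [hZ] using this
  · simp only [star_star]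
    exact coinv_scalar αZ G hG hinj μ hμ1 _ hw

end Uni

/-- Let `A` be a Hopf *-algebra over `ℂ` (the comultiplication is a
*-homomorphism, where the star on `A ⊗ A` is `(a ⊗ b)* = a* ⊗ b*`) admitting a
positive faithful Haar measure `J`.  Let `Z` be an `A`-*-Galois extension and
let `μ` be a positive Haar measure on `Z`.  Then there exists a C*-norm on
`Z`, for every `z ∈ Z` the supremum of `p(z)` over all C*-seminorms `p` on `Z`
is finite, and this supremum is itself a C*-norm on `Z`. -/
theorem star_Galois_extension_has_Cstar_norm
    (A : Type) [Ring A] [HopfAlgebra ℂ A] [StarRing A]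
    -- the star on `A ⊗ A`, as the (unique) additive map with `(a ⊗ b)* = a* ⊗ b*`
    (SA : A ⊗[ℂ] A → A ⊗[ℂ] A)
    (hSAadd : ∀ u v, SA (u + v) = SA u + SA v)
    (hSAtmul : ∀ a b : A, SA (a ⊗ₜ[ℂ] b) = star a ⊗ₜ[ℂ] star b)
    -- the comultiplication is a *-homomorphism
    (hcomul_star : ∀ a : A,
      Coalgebra.comul (R := ℂ) (star a) = SA (Coalgebra.comul (R := ℂ) a))
    -- a positive faithful Haar measure on `A`
    (J : A →ₗ[ℂ] ℂ) (hJ1 : J 1 = 1)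
    (hJinv : ∀ a : A,
      (TensorProduct.rid ℂ A)
          (TensorProduct.map (LinearMap.id (M := A)) J (Coalgebra.comul (R := ℂ) a)) =
        algebraMap ℂ A (J a))
    (hJpos : ∀ a : A, 0 ≤ J (star a * a))
    (hJfaithful : ∀ a : A, a ≠ 0 → 0 < J (star a * a))
    -- `Z` is an `A`-*-Galois extension
    (Z : Type) [Ring Z] [Algebra ℂ Z] [StarRing Z] [Nontrivial Z]
    (αZ : Z →ₐ[ℂ] A ⊗[ℂ] Z)
    (hcoassoc :
      (TensorProduct.assoc ℂ A A Z).toLinearMap ∘ₗ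
          (TensorProduct.map (Coalgebra.comul (R := ℂ) (A := A)) (LinearMap.id (M := Z))) ∘ₗ
          αZ.toLinearMap =
        (TensorProduct.map (LinearMap.id (M := A)) αZ.toLinearMap) ∘ₗ αZ.toLinearMap)
    (hcounit :
      (TensorProduct.lid ℂ Z).toLinearMap ∘ₗ
          (TensorProduct.map (Coalgebra.counit (R := ℂ) (A := A)) (LinearMap.id (M := Z))) ∘ₗ
          αZ.toLinearMap =
        LinearMap.id)
    (hGalois :
      Function.Bijective
        ((TensorProduct.map LinearMap.id (LinearMap.mul' ℂ Z)) ∘ₗ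
          (TensorProduct.assoc ℂ A Z Z).toLinearMap ∘ₗ
          (TensorProduct.map αZ.toLinearMap LinearMap.id)))
    -- the star on `A ⊗ Z`, and `α_Z` is a *-homomorphism
    (SZ : A ⊗[ℂ] Z → A ⊗[ℂ] Z)
    (hSZadd : ∀ u v, SZ (u + v) = SZ u + SZ v)
    (hSZtmul : ∀ (a : A) (z : Z), SZ (a ⊗ₜ[ℂ] z) = star a ⊗ₜ[ℂ] star z)
    (hαZstar : ∀ z : Z, αZ (star z) = SZ (αZ z))
    -- a positive Haar measure `μ` on `Z`
    (μ : Z →ₗ[ℂ] ℂ) (hμ1 : μ 1 = 1)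
    (hμinv : ∀ z : Z,
      (TensorProduct.rid ℂ A)
          (TensorProduct.map (LinearMap.id (M := A)) μ (αZ z)) =
        algebraMap ℂ A (μ z))
    (hμpos : ∀ z : Z, 0 ≤ μ (star z * z)) :
    -- then `Z` carries a C*-norm, every element has a finite supremum of
    -- C*-seminorms, and this supremum is itself a C*-norm
    (∃ N : Z → ℝ, IsCstarNorm N) ∧
    (∀ z : Z, BddAbove ((fun p : Z → ℝ => p z) '' {p : Z → ℝ | IsCstarSeminorm p})) ∧
    IsCstarNorm (fun z : Z => sSup ((fun p : Z → ℝ => p z) '' {p : Z → ℝ | IsCstarSeminorm p})) := by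
  have hA := star_conj_of_tensor SA hSAtmul J hJ1 hJpos
  have hZ := star_conj_of_tensor' hA SZ hSZtmul J hJ1
  have hf : ∀ a : A, J (star a * a) = 0 → a = 0 := fun a ha => by
    by_contra hne
    exact (hJfaithful a hne).ne' ha
  have hG := can_tmul αZ
  have hμf := mu_faithful hA hZ J hJpos hf αZ _ hG hGalois SZ hSZadd hSZtmul hαZstar μ hμ1
    hμinv hμpos
  have hspan := span_lemma hA hZ SA hSAadd hSAtmul hcomul_star J hJpos hf αZ _ hG hGalois.1
    (fun z => LinearMap.congr_fun hcoassoc z) (fun z => LinearMap.congr_fun hcounit z)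
    SZ hSZadd hSZtmul hαZstar μ hμ1 hμinv hμpos hμf
  exact conclusion hZ (gns_norm hZ μ hμpos hμf hspan) hspan
end
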